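/- Let G be a finite minimal nonsupersoluble group with |π(G)| = 3, and let p₁ > p₂ > p₃ be the distinct prime divisors of |G| with Sylow p_i-subgroups G_{p_i}. Then: (1) G is Ore dispersive and G_{p₂}, G_{p₃} are cyclic; (2) G has precisely three conjugacy classes of maximal subgroups; (3) G_{p₁}/Φ(G_{p₁}), G_{p₁}G_{p₂}/G_{p₁}Φ(G_{p₂}) and G_{p₁}G_{p₂}G_{p₃}/G_{p₁}G_{p₂}Φ(G_{p₃}) are chief factors of G. -/

import Mathlib

open Subgroup

/-- A finite group is supersoluble if it has a normal series, all of whose terms are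
normal in the whole group, with cyclic factors. -/
def IsSupersoluble (G : Type*) [Group G] : Prop :=
  ∃ (n : ℕ) (c : Fin (n + 1) → Subgroup G) (hc : ∀ i, (c i).Normal),
    c 0 = ⊥ ∧ c (Fin.last n) = ⊤ ∧
    ∀ i : Fin n, c i.castSucc ≤ c i.succ ∧
      haveI := (hc i.castSucc).subgroupOf (c i.succ)
      IsCyclic (↥(c i.succ) ⧸ ((c i.castSucc).subgroupOf (c i.succ)))

/-- `H` is a maximal subgroup of `K`, where `H ≤ K` are subgroups of a common group. -/
def IsMaximalIn {G : Type*} [Group G] (H K : Subgroup G) : Prop :=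
  H ≤ K ∧ IsCoatom (H.subgroupOf K)

/-- The `n`-maximal subgroups of `G`: `0`-maximal is `G` itself, and an `(n+1)`-maximal
subgroup is a maximal subgroup of some `n`-maximal subgroup. -/
def IsNMaximal {G : Type*} [Group G] : ℕ → Subgroup G → Prop
  | 0, H => H = ⊤
  | n + 1, H => ∃ K : Subgroup G, IsNMaximal n K ∧ IsMaximalIn H K

/-- `H` is `K`-`𝔘`-subnormal in `K`: there is a chain of subgroups
`H = H₀ ≤ H₁ ≤ ⋯ ≤ Hₜ = K` such that at each step either `H_{i-1}` is normal in `H_i`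
or `H_i` modulo the core of `H_{i-1}` in `H_i` is supersoluble. -/
def IsKUSubnormalIn {G : Type*} [Group G] (H K : Subgroup G) : Prop :=
  ∃ (n : ℕ) (c : Fin (n + 1) → Subgroup G),
    c 0 = H ∧ c (Fin.last n) = K ∧
    ∀ i : Fin n, c i.castSucc ≤ c i.succ ∧
      (((c i.castSucc).subgroupOf (c i.succ)).Normal ∨
        IsSupersoluble (↥(c i.succ) ⧸ ((c i.castSucc).subgroupOf (c i.succ)).normalCore))

/-- `H` is `K`-`𝔘`-subnormal in `G`. -/
def IsKUSubnormal {G : Type*} [Group G] (H : Subgroup G) : Prop :=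
  IsKUSubnormalIn H ⊤

/-- `H` is `𝔘`-subnormal in `G`: there is a chain of subgroups
`H = H₀ ≤ H₁ ≤ ⋯ ≤ Hₙ = G` with `H_i` modulo the core of `H_{i-1}` in `H_i`
supersoluble at each step. -/
def IsUSubnormal {G : Type*} [Group G] (H : Subgroup G) : Prop :=
  ∃ (n : ℕ) (c : Fin (n + 1) → Subgroup G),
    c 0 = H ∧ c (Fin.last n) = ⊤ ∧
    ∀ i : Fin n, c i.castSucc ≤ c i.succ ∧
      IsSupersoluble (↥(c i.succ) ⧸ ((c i.castSucc).subgroupOf (c i.succ)).normalCore)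

/-- The supersoluble residual `G^𝔘` of `G`: the intersection of all normal subgroups `N`
of `G` with `G/N` supersoluble. -/
def ssResidual (G : Type*) [Group G] : Subgroup G :=
  ⨅ N ∈ {N : Subgroup G | ∃ hN : N.Normal, haveI := hN; IsSupersoluble (G ⧸ N)}, N

/-- `N` is a minimal normal subgroup of `G`. -/
def IsMinimalNormal {G : Type*} [Group G] (N : Subgroup G) : Prop :=
  N.Normal ∧ N ≠ ⊥ ∧ ∀ M : Subgroup G, M.Normal → M ≤ N → M ≠ ⊥ → M = N

/-- `G` is minimal nonsupersoluble: not supersoluble, but all proper subgroups are. -/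
def IsMinimalNonsupersoluble (G : Type*) [Group G] : Prop :=
  ¬ IsSupersoluble G ∧ ∀ H : Subgroup G, H ≠ ⊤ → IsSupersoluble H

/-- `G` is an `SDH`-group: minimal nonsupersoluble with `G^𝔘` a minimal normal subgroup. -/
def IsSDH (G : Type*) [Group G] : Prop :=
  IsMinimalNonsupersoluble G ∧ IsMinimalNormal (ssResidual G)

/-- `H` is a Sylow `p`-subgroup of its ambient (finite) group. -/
def IsSylowSubgroup {G : Type*} [Group G] (p : ℕ) (H : Subgroup G) : Prop :=
  IsPGroup p H ∧ ¬ p ∣ H.index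

/-- A finite group is Ore dispersive if, enumerating the prime divisors of `|G|`
in decreasing order as `p₁ > p₂ > ⋯ > pₙ`, for every `i` it has a normal subgroup of
order `p₁^{a₁} ⋯ p_i^{a_i}`. -/
def OreDispersive (G : Type*) [Group G] : Prop :=
  ∀ p : ℕ, p.Prime → ∃ N : Subgroup G, N.Normal ∧
    Nat.card N =
      ∏ q ∈ (Nat.card G).primeFactors.filter (fun q => p ≤ q),
        q ^ (Nat.card G).factorization q

/-- `A/B` is a chief factor of `G`. -/
def IsChiefFactor {G : Type*} [Group G] (A B : Subgroup G) : Prop :=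
  A.Normal ∧ B ≤ A ∧ ∃ hB : B.Normal,
    haveI := hB
    IsMinimalNormal (A.map (QuotientGroup.mk' B))

/-- The subgroups `H` and `K` of `G` are conjugate in `G`. -/
def ConjSubgroup {G : Type*} [Group G] (H K : Subgroup G) : Prop :=
  ∃ g : G, K = H.map (MulAut.conj g).toMonoidHom

/-- The Frattini subgroup of a subgroup `H` of `G`, as a subgroup of `G`. -/
def frattiniIn {G : Type*} [Group G] (H : Subgroup G) : Subgroup G :=
  (frattini H).map H.subtype

/-- `G = P ⋊ (Q ⋊ R)` as an internal statement about subgroups `P`, `Q`, `R` of `G`. -/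
def IsInternalSemidirect3 {G : Type*} [Group G] (P Q R : Subgroup G) : Prop :=
  P.Normal ∧ P ⊓ (Q ⊔ R) = ⊥ ∧ P ⊔ Q ⊔ R = ⊤ ∧
    (Q.subgroupOf (Q ⊔ R)).Normal ∧ Q ⊓ R = ⊥

/-- `G = P ⋊ (Q ⋊ (R ⋊ T))` as an internal statement about subgroups of `G`. -/
def IsInternalSemidirect4 {G : Type*} [Group G] (P Q R T : Subgroup G) : Prop :=
  P.Normal ∧ P ⊓ (Q ⊔ R ⊔ T) = ⊥ ∧ P ⊔ Q ⊔ R ⊔ T = ⊤ ∧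
    (Q.subgroupOf (Q ⊔ R ⊔ T)).Normal ∧ Q ⊓ (R ⊔ T) = ⊥ ∧
    (R.subgroupOf (R ⊔ T)).Normal ∧ R ⊓ T = ⊥


/-- One step of a normal series with cyclic factors. -/
def SStep {G : Type*} [Group G] (X Y : Subgroup G) : Prop :=
  X.Normal ∧ Y.Normal ∧ ∃ b, Y = X ⊔ zpowers b

theorem sstep_of_cyclic {G : Type*} [Group G] {X Y : Subgroup G} (hX : X.Normal) (hXY : X ≤ Y)
    (h : haveI := hX.subgroupOf Y; IsCyclic (↥Y ⧸ (X.subgroupOf Y))) :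
    ∃ b, Y = X ⊔ zpowers b := by
  have := hX.subgroupOf Y
  obtain ⟨g, hg⟩ := h.exists_generator
  obtain ⟨⟨b, hb⟩, rfl⟩ := QuotientGroup.mk_surjective g
  refine ⟨b, le_antisymm ?_ (sup_le hXY (by simpa using hb))⟩
  intro y hy
  obtain ⟨k, hk⟩ := mem_zpowers_iff.1 (hg (QuotientGroup.mk ⟨y, hy⟩))
  rw [← QuotientGroup.mk_zpow, QuotientGroup.eq, mem_subgroupOf] at hk
  simp only [coe_mul, coe_inv, SubgroupClass.coe_zpow] at hk
  have : y = b ^ k * ((b ^ k)⁻¹ * y) := by group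
  rw [this]
  exact mul_mem (mem_sup_right ⟨k, rfl⟩) (mem_sup_left hk)

theorem mem_sup_zpowers {G : Type*} [Group G] {X : Subgroup G} (hX : X.Normal) {b y : G}
    (hy : y ∈ X ⊔ zpowers b) : ∃ x ∈ X, ∃ k : ℤ, y = x * b ^ k := by
  rw [← SetLike.mem_coe, normal_mul] at hy
  obtain ⟨x, hx, z, ⟨k, rfl⟩, rfl⟩ := hy
  exact ⟨x, hx, k, rfl⟩

theorem cyclic_of_sstep {G : Type*} [Group G] {X Y : Subgroup G} (hX : X.Normal)
    (h : ∃ b, Y = X ⊔ zpowers b) :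
    haveI := hX.subgroupOf Y; IsCyclic (↥Y ⧸ (X.subgroupOf Y)) := by
  have := hX.subgroupOf Y
  obtain ⟨b, rfl⟩ := h
  have hb : b ∈ X ⊔ zpowers b := mem_sup_right (mem_zpowers b)
  refine ⟨⟨QuotientGroup.mk ⟨b, hb⟩, ?_⟩⟩
  intro g
  obtain ⟨⟨y, hy⟩, rfl⟩ := QuotientGroup.mk_surjective g
  rw [sup_comm, ← SetLike.mem_coe, mul_normal] at hy
  obtain ⟨z, ⟨k, rfl⟩, x, hx, rfl⟩ := hy
  refine ⟨k, ?_⟩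
  change (QuotientGroup.mk _ : (↥(X ⊔ zpowers b) ⧸ _)) ^ k = _
  rw [← QuotientGroup.mk_zpow, QuotientGroup.eq, mem_subgroupOf]
  simpa using hx

theorem ss_iff {G : Type*} [Group G] :
    IsSupersoluble G ↔ Relation.ReflTransGen (SStep (G := G)) ⊥ ⊤ := by
  constructor
  · rintro ⟨n, c, hc, h0, hl, hs⟩
    have : ∀ i : Fin (n + 1), Relation.ReflTransGen (SStep (G := G)) ⊥ (c i) := by
      intro i
      induction i using Fin.induction with
      | zero => rw [h0]
      | succ i ih =>
        exact ih.tail ⟨hc _, hc _, sstep_of_cyclic (hc _) (hs i).1 (hs i).2⟩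
    rw [← hl]; exact this _
  · intro h
    have : ∀ X : Subgroup G, Relation.ReflTransGen (SStep (G := G)) ⊥ X →
        ∃ (n : ℕ) (c : Fin (n + 1) → Subgroup G), (∀ i, (c i).Normal) ∧
        c 0 = ⊥ ∧ c (Fin.last n) = X ∧ ∀ i : Fin n, SStep (c i.castSucc) (c i.succ) := by
      intro X hX
      induction hX with
      | refl => exact ⟨0, fun _ => ⊥, fun _ => inferInstance, rfl, rfl, fun i => i.elim0⟩
      | tail hab hbc ih =>
        rename_i Y Z
        obtain ⟨n, c, hc, h0, hl, hs⟩ := ih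
        refine ⟨n + 1, Fin.snoc c Z, ?_, ?_, ?_, ?_⟩
        · intro i
          refine Fin.lastCases ?_ (fun i => ?_) i
          · simpa using hbc.2.1
          · simpa using hc i
        · rw [← Fin.castSucc_zero, Fin.snoc_castSucc, h0]
        · simp
        · intro i
          refine Fin.lastCases ?_ (fun i => ?_) i
          · rw [Fin.snoc_castSucc, hl, Fin.succ_last, Fin.snoc_last]; exact hbc
          · rw [Fin.snoc_castSucc, ← Fin.castSucc_succ, Fin.snoc_castSucc]
            exact hs i
    obtain ⟨n, c, hc, h0, hl, hs⟩ := this _ h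
    refine ⟨n, c, hc, h0, hl, fun i => ⟨?_, cyclic_of_sstep (hc _) (hs i).2.2⟩⟩
    obtain ⟨b, hb⟩ := (hs i).2.2
    rw [hb]; exact le_sup_left

theorem SStep.map {G H : Type*} [Group G] [Group H] (f : G →* H) (hf : Function.Surjective f)
    {X Y : Subgroup G} (h : SStep X Y) : SStep (X.map f) (Y.map f) := by
  obtain ⟨hX, hY, b, rfl⟩ := h
  refine ⟨hX.map f hf, hY.map f hf, f b, ?_⟩
  rw [Subgroup.map_sup, MonoidHom.map_zpowers]

theorem SStep.sup {G : Type*} [Group G] {X Y : Subgroup G} (h : SStep X Y)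
    {N : Subgroup G} (hN : N.Normal) : SStep (N ⊔ X) (N ⊔ Y) := by
  obtain ⟨hX, hY, b, rfl⟩ := h
  exact ⟨inferInstance, sup_normal _ _, b, by rw [sup_assoc]⟩

theorem SStep.comap {G : Type*} [Group G] {N : Subgroup G} [N.Normal] {X Y : Subgroup (G ⧸ N)}
    (h : SStep X Y) : SStep (X.comap (QuotientGroup.mk' N)) (Y.comap (QuotientGroup.mk' N)) := by
  obtain ⟨hX, hY, b, rfl⟩ := h
  obtain ⟨b, rfl⟩ := QuotientGroup.mk'_surjective N b
  refine ⟨hX.comap _, hY.comap _, b, ?_⟩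
  rw [← MonoidHom.map_zpowers]
  apply map_injective_of_ker_le (QuotientGroup.mk' N)
  · exact MonoidHom.ker_le_comap _ _
  · exact (MonoidHom.ker_le_comap _ _).trans le_sup_left
  · rw [Subgroup.map_sup, map_comap_eq_self_of_surjective (QuotientGroup.mk'_surjective N),
      map_comap_eq_self_of_surjective (QuotientGroup.mk'_surjective N)]

theorem SStep.inf {G : Type*} [Group G] {X Y : Subgroup G} (h : SStep X Y)
    {N : Subgroup G} (hN : N.Normal) : SStep (X ⊓ N) (Y ⊓ N) := by
  obtain ⟨hX, hY, b, hb⟩ := h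
  refine ⟨normal_inf_normal _ _, normal_inf_normal _ _, ?_⟩
  have h1 : (Y ⊓ N).map (QuotientGroup.mk' X) ≤ zpowers (QuotientGroup.mk' X b) := by
    rintro _ ⟨y, ⟨hy, -⟩, rfl⟩
    rw [hb] at hy
    obtain ⟨x, hx, k, rfl⟩ := mem_sup_zpowers hX hy
    refine ⟨k, ?_⟩
    have : QuotientGroup.mk' X x = 1 := (QuotientGroup.eq_one_iff x).2 hx
    simp only [map_mul, map_zpow, this, one_mul]
  have h2 : IsCyclic ↥((Y ⊓ N).map (QuotientGroup.mk' X)) := Subgroup.isCyclic_of_le h1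
  obtain ⟨g, hg⟩ := (Subgroup.isCyclic_iff_exists_zpowers_eq_top _).1 h2
  have hgm : g ∈ (Y ⊓ N).map (QuotientGroup.mk' X) := hg ▸ mem_zpowers g
  obtain ⟨c, hc, rfl⟩ := hgm
  refine ⟨c, le_antisymm ?_ (sup_le (inf_le_inf_right _ (hb ▸ le_sup_left)) (by simpa using hc))⟩
  intro n hn
  have : QuotientGroup.mk' X n ∈ zpowers (QuotientGroup.mk' X c) := hg ▸ mem_map_of_mem _ hn
  obtain ⟨k, hk⟩ := this
  have hk' : (QuotientGroup.mk' X) (c ^ k) = QuotientGroup.mk' X n := by simpa using hk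
  have h3 : (c ^ k)⁻¹ * n ∈ X := QuotientGroup.eq.1 hk'
  have h4 : (c ^ k)⁻¹ * n ∈ N := N.mul_mem (N.inv_mem (N.zpow_mem hc.2 k)) hn.2
  have : n = c ^ k * ((c ^ k)⁻¹ * n) := by group
  rw [this]
  exact mul_mem (mem_sup_right ⟨k, rfl⟩) (mem_sup_left ⟨h3, h4⟩)

theorem SStep.le {G : Type*} [Group G] {X Y : Subgroup G} (h : SStep X Y) : X ≤ Y := by
  obtain ⟨hX, hY, b, rfl⟩ := h
  exact le_sup_left

theorem ss_map {G H : Type*} [Group G] [Group H] (f : G →* H) (hf : Function.Surjective f)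
    (h : IsSupersoluble G) : IsSupersoluble H := by
  rw [ss_iff] at h ⊢
  have : Relation.ReflTransGen SStep (Subgroup.map f ⊥) (Subgroup.map f ⊤) := h.lift (Subgroup.map f) (fun _ _ h => SStep.map f hf h)
  rwa [Subgroup.map_bot, Subgroup.map_top_of_surjective f hf] at this

theorem chain_top {G : Type*} [Group G] {N : Subgroup G} [N.Normal] (h : IsSupersoluble (G ⧸ N)) :
    Relation.ReflTransGen (SStep (G := G)) N ⊤ := by
  rw [ss_iff] at h
  have : Relation.ReflTransGen SStep (Subgroup.comap (QuotientGroup.mk' N) ⊥)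
      (Subgroup.comap (QuotientGroup.mk' N) ⊤) := h.lift (Subgroup.comap (QuotientGroup.mk' N)) (fun _ _ h => SStep.comap h)
  simpa using this

theorem ss_of_chain {G : Type*} [Group G] {N : Subgroup G} [N.Normal] (h : IsSupersoluble (G ⧸ N))
    (h' : Relation.ReflTransGen (SStep (G := G)) ⊥ N) : IsSupersoluble G :=
  ss_iff.2 (h'.trans (chain_top h))

theorem ss_of_cyclic {G : Type*} [Group G] {c : G} [hN : (zpowers c).Normal]
    (h : IsSupersoluble (G ⧸ zpowers c)) : IsSupersoluble G :=
  ss_of_chain h (Relation.ReflTransGen.single ⟨inferInstance, hN, c, by simp⟩)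

/-- A nontrivial normal subgroup of a supersoluble group contains a cyclic normal subgroup. -/
theorem ss_exists_cyclic {G : Type*} [Group G] (h : IsSupersoluble G) {A : Subgroup G}
    (hA : A.Normal) (hne : A ≠ ⊥) : ∃ c ∈ A, c ≠ 1 ∧ (zpowers c).Normal := by
  rw [ss_iff] at h
  have key : ∀ X : Subgroup G, Relation.ReflTransGen (SStep (G := G)) ⊥ X →
      X ⊓ A = ⊥ ∨ ∃ c ∈ A, c ≠ 1 ∧ (zpowers c).Normal := by
    intro X hX
    induction hX with
    | refl => left; simp
    | tail hab hbc ih =>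
      rename_i Y Z
      rcases ih with ih | ih
      · by_cases hZ : Z ⊓ A = ⊥
        · exact Or.inl hZ
        right
        have h3 := hbc.inf hA
        obtain ⟨-, h1, c, hc⟩ := h3
        rw [ih, bot_sup_eq] at hc
        refine ⟨c, ?_, ?_, hc ▸ h1⟩
        · have : c ∈ Z ⊓ A := hc ▸ mem_zpowers c
          exact this.2
        · rintro rfl
          simp at hc
          exact hZ hc
      · exact Or.inr ih
  rcases key _ h with h | h
  · simp at h; exact absurd h hne
  · exact h

/-- A nontrivial normal subgroup of a supersoluble group has a proper subgroup, normal in the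
whole group, with cyclic quotient. -/
theorem ss_exists_max {G : Type*} [Group G] (h : IsSupersoluble G) {A : Subgroup G}
    (hA : A.Normal) (hne : A ≠ ⊥) :
    ∃ L : Subgroup G, L.Normal ∧ L < A ∧ ∃ c, A = L ⊔ zpowers c := by
  rw [ss_iff] at h
  have key : ∀ X : Subgroup G, Relation.ReflTransGen (SStep (G := G)) ⊥ X → A ≤ X →
      ∃ L : Subgroup G, L.Normal ∧ L < A ∧ ∃ c, A = L ⊔ zpowers c := by
    intro X hX
    induction hX with
    | refl => intro h; exact absurd (le_bot_iff.1 h) hne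
    | tail hab hbc ih =>
      rename_i Y Z
      intro hAZ
      by_cases hY : A ≤ Y
      · exact ih hY
      obtain ⟨h1, -, c, hc⟩ := hbc.inf hA
      rw [inf_eq_right.2 hAZ] at hc
      refine ⟨Y ⊓ A, h1, lt_of_le_of_ne inf_le_right ?_, c, hc⟩
      intro h; exact hY (inf_eq_right.1 h)
  exact key _ h le_top

theorem normal_of_le_zpowers {G : Type*} [Group G] {c : G} (hc : (zpowers c).Normal)
    {H : Subgroup G} (h : H ≤ zpowers c) : H.Normal := by
  refine ⟨fun x hx g => ?_⟩
  obtain ⟨k, rfl⟩ := h hx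
  obtain ⟨j, hj⟩ := hc.conj_mem c (mem_zpowers c) g
  simp only at hx hj ⊢
  have : g * c ^ k * g⁻¹ = (c ^ k) ^ j := by
    rw [← conj_zpow, ← hj, ← zpow_mul, ← zpow_mul, mul_comm]
  rw [this]
  exact zpow_mem hx j

theorem normal_of_le_cyclic {G : Type*} [Group G] {A : Subgroup G} (hA : A.Normal)
    (hc : IsCyclic A) {H : Subgroup G} (h : H ≤ A) : H.Normal := by
  obtain ⟨c, rfl⟩ := (Subgroup.isCyclic_iff_exists_zpowers_eq_top _).1 hc
  exact normal_of_le_zpowers hA h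

theorem mns_quot_proper {G : Type*} [Group G] (hG : ∀ H : Subgroup G, H ≠ ⊤ → IsSupersoluble H)
    {N : Subgroup G} [N.Normal] (H : Subgroup (G ⧸ N)) (hH : H ≠ ⊤) : IsSupersoluble H := by
  have h1 : H.comap (QuotientGroup.mk' N) ≠ ⊤ := by
    intro h
    apply hH
    rw [← map_comap_eq_self_of_surjective (QuotientGroup.mk'_surjective N) H, h,
      Subgroup.map_top_of_surjective _ (QuotientGroup.mk'_surjective N)]
  have h2 := hG _ h1
  refine ss_map ((QuotientGroup.mk' N).subgroupComap H) ?_ h2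
  exact MonoidHom.subgroupComap_surjective_of_surjective _ _ (QuotientGroup.mk'_surjective N)


theorem mem_of_pow_coprime {G : Type*} [Group G] {L : Subgroup G} (hL : L.Normal)
    {x : G} {m : ℕ} (hx : x ^ m = 1) (h : m.Coprime L.index) : x ∈ L := by
  have h1 : (QuotientGroup.mk' L x) ^ m = 1 := by rw [← map_pow, hx, map_one]
  have h2 : (QuotientGroup.mk' L x) ^ L.index = 1 := by
    rw [Subgroup.index]; exact pow_card_eq_one'
  have h3 := orderOf_dvd_of_pow_eq_one h1
  have h4 := orderOf_dvd_of_pow_eq_one h2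
  have h5 := Nat.dvd_gcd h3 h4
  rw [h, Nat.dvd_one, orderOf_eq_one_iff] at h5
  exact (QuotientGroup.eq_one_iff x).1 h5

/-- A normal Hall subgroup of a normal subgroup is normal. -/
theorem normal_map_of_coprime {G : Type*} [Group G] {N : Subgroup G} (hN : N.Normal)
    {L : Subgroup N} (hL : L.Normal) (h : (Nat.card L).Coprime L.index) :
    (L.map N.subtype).Normal := by
  refine ⟨fun x hx g => ?_⟩
  obtain ⟨y, hy, rfl⟩ := hx
  have h1 : g * y * g⁻¹ ∈ N := hN.conj_mem y y.2 g
  refine ⟨⟨g * y * g⁻¹, h1⟩, ?_, rfl⟩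
  refine mem_of_pow_coprime hL (m := Nat.card L) ?_ h
  ext
  have : y ^ Nat.card L = 1 := by
    exact orderOf_dvd_iff_pow_eq_one.1 (Subgroup.orderOf_dvd_natCard L hy)
  have h2 : (y : G) ^ Nat.card L = 1 := by simpa using congrArg (fun z : N => (z : G)) this
  simp [conj_pow, h2]

theorem card_comap_mk {G : Type*} [Group G] [Finite G] {N : Subgroup G} [N.Normal] (K : Subgroup (G ⧸ N)) :
    Nat.card (K.comap (QuotientGroup.mk' N)) = Nat.card N * Nat.card K := by
  have h1 := (K.comap (QuotientGroup.mk' N)).card_mul_index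
  rw [index_comap_of_surjective K (QuotientGroup.mk'_surjective N)] at h1
  have h2 := K.card_mul_index
  have h3 := N.card_mul_index
  rw [Subgroup.index, ← h2, ← mul_assoc] at h3
  exact Nat.eq_of_mul_eq_mul_right (Nat.pos_of_ne_zero K.index_ne_zero_of_finite) (h1.trans h3.symm)

universe u

theorem ss_hall (n : ℕ) : ∀ (k : ℕ) (G : Type u) [Group G] [Finite G], Nat.card G = k →
    IsSupersoluble G → ∃ N : Subgroup G, N.Normal ∧
      (∀ l : ℕ, l.Prime → l ∣ Nat.card N → n ≤ l) ∧ (∀ l : ℕ, l.Prime → l ∣ N.index → l < n) := by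
  intro k
  induction k using Nat.strong_induction_on with
  | _ k ih =>
  intro G _ _ hk hG
  rcases subsingleton_or_nontrivial G with hs | hs
  · refine ⟨⊥, inferInstance, ?_, ?_⟩
    · intro l hl h; simp at h; exact absurd h hl.ne_one
    · intro l hl h
      rw [index_bot, Nat.card_of_subsingleton (1 : G), Nat.dvd_one] at h
      exact absurd h hl.ne_one
  obtain ⟨c, -, hc1, hcn⟩ := ss_exists_cyclic hG (A := ⊤) inferInstance top_ne_bot
  have ho : orderOf c ≠ 1 := by rwa [Ne, orderOf_eq_one_iff]
  obtain ⟨l, hl, hld⟩ := Nat.exists_prime_and_dvd ho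
  have hpos : orderOf c ≠ 0 := (orderOf_pos c).ne'
  set d := c ^ (orderOf c / l) with hd
  have hod : orderOf d = l := orderOf_pow_orderOf_div hpos hld
  have hCn : (zpowers d).Normal :=
    normal_of_le_zpowers hcn (by rw [zpowers_le]; exact pow_mem (mem_zpowers c) _)
  set C := zpowers d with hC
  have hCcard : Nat.card C = l := by rw [hC, Nat.card_zpowers, hod]
  have hlt : Nat.card (G ⧸ C) < k := by
    have := C.card_mul_index
    rw [Subgroup.index, hCcard, hk] at this
    have h0 : 0 < Nat.card (G ⧸ C) := Nat.card_pos
    have := hl.two_le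
    nlinarith
  obtain ⟨K, hKn, hK1, hK2⟩ := ih _ hlt (G ⧸ C) rfl (ss_map (QuotientGroup.mk' C)
    (QuotientGroup.mk'_surjective C) hG)
  set N := K.comap (QuotientGroup.mk' C) with hNdef
  have hNn : N.Normal := hKn.comap _
  have hNc : Nat.card N = l * Nat.card K := by rw [hNdef, card_comap_mk, hCcard]
  have hNi : N.index = K.index :=
    index_comap_of_surjective K (QuotientGroup.mk'_surjective C)
  by_cases hnl : n ≤ l
  · refine ⟨N, hNn, ?_, ?_⟩
    · intro q hq h
      rw [hNc, hq.dvd_mul] at h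
      rcases h with h | h
      · rw [(Nat.prime_dvd_prime_iff_eq hq hl).1 h]; exact hnl
      · exact hK1 q hq h
    · rw [hNi]; exact hK2
  push Not at hnl
  set m := Nat.card K with hm
  have hcop : l.Coprime m := by
    rw [hl.coprime_iff_not_dvd]
    intro h; exact absurd (hK1 l hl h) (by omega)
  have hcop2 : m.Coprime (l - 1) := by
    refine Nat.coprime_of_dvd fun q hq h1 h2 => ?_
    have h3 := hK1 q hq h1
    have h4 := Nat.le_of_dvd (by have := hl.two_le; omega) h2
    omega
  have hCcyc : IsCyclic C := inferInstance
  -- C is central in N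
  have hcent : ∀ x ∈ N, ∀ y ∈ C, x * y * x⁻¹ = y := by
    intro x hx y hy
    have hxm : x ^ m ∈ C := by
      have h1 : (⟨QuotientGroup.mk' C x, hx⟩ : K) ^ m = 1 := pow_card_eq_one'
      have h2 : (QuotientGroup.mk' C x) ^ m = 1 := congrArg (fun z : K => (z : G ⧸ C)) h1
      rw [← map_pow] at h2
      exact (QuotientGroup.eq_one_iff _).1 h2
    have h1 : (MulAut.conjNormal x : MulAut C) ^ m = 1 := by
      rw [← map_pow]
      ext z
      obtain ⟨i, hi⟩ := hxm
      obtain ⟨j, hj⟩ := z.2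
      simp only at hi hj
      rw [MulAut.conjNormal_apply, ← hi, ← hj, MulAut.one_apply, ← hj]
      group
      
    have h2 : (MulAut.conjNormal x : MulAut C) ^ (l - 1) = 1 := by
      have := pow_card_eq_one' (x := (MulAut.conjNormal x : MulAut C))
      rwa [IsCyclic.card_mulAut, hCcard, Nat.totient_prime hl] at this
    have h3 := Nat.dvd_gcd (orderOf_dvd_of_pow_eq_one h1) (orderOf_dvd_of_pow_eq_one h2)
    rw [hcop2, Nat.dvd_one, orderOf_eq_one_iff] at h3
    have h4 := congrArg (fun f : MulAut C => ((f ⟨y, hy⟩ : C) : G)) h3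
    simpa using h4
  have hCN : C ≤ N := by
    rw [hNdef]; intro y hy
    have : QuotientGroup.mk' C y = 1 := (QuotientGroup.eq_one_iff y).2 hy
    rw [mem_comap, this]; exact one_mem _
  have hC'c : Nat.card (C.subgroupOf N) = l := by
    rw [Nat.card_congr (subgroupOfEquivOfLe hCN).toEquiv, hCcard]
  have hC'i : (C.subgroupOf N).index = m := by
    have := (C.subgroupOf N).card_mul_index
    rw [hC'c, hNc] at this
    exact Nat.eq_of_mul_eq_mul_left hl.pos this
  obtain ⟨L, hL⟩ := exists_right_complement'_of_coprime (N := C.subgroupOf N)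
    (by rw [hC'c, hC'i]; exact hcop)
  have hLc : Nat.card L = m := by
    have := hL.card_mul_card
    rw [hC'c, hNc] at this
    exact Nat.eq_of_mul_eq_mul_left hl.pos this
  have hLi : L.index = l := by rw [hL.index_eq_card, hC'c]
  have hLn : L.Normal := by
    rw [← normalizer_eq_top_iff, eq_top_iff, ← hL.sup_eq_top, sup_le_iff]
    refine ⟨fun y hy => ?_, le_normalizer⟩
    rw [mem_normalizer_iff]
    intro z
    have : y * z * y⁻¹ = z := by
      have h1 := hcent z z.2 y hy
      have h2 : z * y * z⁻¹ = y := Subtype.ext h1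
      rw [mul_inv_eq_iff_eq_mul] at h2 ⊢
      exact h2.symm
    rw [this]
  refine ⟨L.map N.subtype, normal_map_of_coprime hNn hLn (by rw [hLc, hLi]; exact hcop.symm),
    ?_, ?_⟩
  · have : Nat.card (L.map N.subtype) = m := by
      rw [Nat.card_congr (L.equivMapOfInjective _ N.subtype_injective).symm.toEquiv, hLc]
    rw [this]; exact hK1
  · rw [index_map_subtype, hLi, hNi]
    intro q hq h
    rw [hq.dvd_mul] at h
    rcases h with h | h
    · rw [(Nat.prime_dvd_prime_iff_eq hq hl).1 h]; exact hnl
    · exact hK2 q hq h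


theorem sup_sylow_eq_top {N : Type*} [Group N] [Finite N] {l : ℕ} [Fact l.Prime]
    (C : Subgroup N) (S : Sylow l N)
    (h : ∀ x : N, ∀ s : ℕ, s.Prime → s ≠ l → (∃ k, orderOf x = s ^ k) → x ∈ C) :
    C ⊔ (S : Subgroup N) = ⊤ := by
  rw [← index_eq_one]
  by_contra hne
  obtain ⟨s, hs, hd⟩ := Nat.exists_prime_and_dvd hne
  by_cases hsl : s = l
  · subst hsl
    exact S.not_dvd_index (hd.trans (index_dvd_of_le le_sup_right))
  · have : Fact s.Prime := ⟨hs⟩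
    obtain ⟨T⟩ : Nonempty (Sylow s N) := inferInstance
    have hT : (T : Subgroup N) ≤ C := by
      intro x hx
      refine h x s hs hsl ?_
      obtain ⟨k, hk⟩ := (IsPGroup.iff_orderOf.1 T.isPGroup') ⟨x, hx⟩
      exact ⟨k, by rwa [orderOf_mk] at hk⟩
    exact T.not_dvd_index (hd.trans (index_dvd_of_le (hT.trans le_sup_left)))

/-- every element of prime power order (prime different from l) normalizing an l-subgroup
centralizes it -/
def LCond (G : Type*) [Group G] (l : ℕ) : Prop :=
  ∀ D : Subgroup G, IsPGroup l D → ∀ x ∈ normalizer (D : Set G), ∀ s : ℕ, s.Prime → s ≠ l →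
    (∃ k, orderOf x = s ^ k) → x ∈ centralizer (D : Set G)

theorem mem_sylow_smul {G : Type*} [Group G] {l : ℕ} {c x : G} {P : Sylow l G} :
    x ∈ c • P ↔ c⁻¹ * x * c ∈ P := by
  rw [← SetLike.mem_coe, Sylow.coe_smul, Set.mem_smul_set_iff_inv_smul_mem]
  simp

theorem cent_normal {G : Type*} [Group G] (D : Subgroup G) :
    ((centralizer (D : Set G)).subgroupOf (normalizer (D : Set G))).Normal := by
  refine ⟨fun x hx g => ?_⟩
  rw [mem_subgroupOf, mem_centralizer_iff] at hx ⊢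
  intro d hd
  have hd' : (g : G)⁻¹ * d * g ∈ D := (mem_normalizer_iff''.1 g.2 d).1 hd
  have := hx _ hd'
  simp only [coe_mul, coe_inv]
  calc d * ((g : G) * x * (g : G)⁻¹) = g * ((g : G)⁻¹ * d * g * x) * (g : G)⁻¹ := by group
    _ = g * (x * ((g : G)⁻¹ * d * g)) * (g : G)⁻¹ := by rw [this]
    _ = _ := by group

theorem norm_conj {G : Type*} [Group G] [Finite G] {l : ℕ} [Fact l.Prime] (hL : LCond G l)
    (D : Subgroup G) (hD : IsPGroup l D) (S T : Sylow l (normalizer (D : Set G))) :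
    ∃ c : normalizer (D : Set G), (c : G) ∈ centralizer (D : Set G) ∧ c • S = T := by
  obtain ⟨n, rfl⟩ := MulAction.exists_smul_eq (normalizer (D : Set G)) S T
  have hC := cent_normal D
  have htop := sup_sylow_eq_top ((centralizer (D : Set G)).subgroupOf (normalizer (D : Set G))) S
    (by
      intro x s hs hsl ⟨k, hk⟩
      rw [mem_subgroupOf]
      exact hL D hD x x.2 s hs hsl ⟨k, by rwa [orderOf_coe]⟩)
  have hn : n ∈ (((centralizer (D : Set G)).subgroupOf (normalizer (D : Set G)) ⊔
    (S : Subgroup _) : Subgroup _) : Set _) := by rw [htop]; trivial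
  rw [normal_mul] at hn
  obtain ⟨c, hc, s, hs, rfl⟩ := hn
  refine ⟨c, mem_subgroupOf.1 hc, ?_⟩
  dsimp only
  rw [mul_smul]
  congr 1
  symm
  rw [Sylow.smul_eq_iff_mem_normalizer]
  exact le_normalizer hs

theorem normalizer_grow {G : Type*} [Group G] [Finite G] {l : ℕ} [Fact l.Prime]
    {P D : Subgroup G} (hP : IsPGroup l P) (h : D < P) : D < P ⊓ normalizer (D : Set G) := by
  have h1 : Group.IsNilpotent P := hP.isNilpotent
  have h2 := Group.normalizerCondition_of_isNilpotent (G := P) (D.subgroupOf P)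
    (lt_top_iff_ne_top.2 (by rw [Ne, subgroupOf_eq_top]; exact h.not_ge))
  refine lt_of_le_of_ne (le_inf h.le le_normalizer) fun he => h2.not_ge ?_
  rw [← subgroupOf_normalizer_eq h.le]
  intro x hx
  rw [mem_subgroupOf] at hx ⊢
  rw [he]; exact ⟨x.2, hx⟩

theorem fusion {G : Type*} [Group G] [Finite G] {l : ℕ} [Fact l.Prime] (hL : LCond G l) :
    ∀ (k : ℕ) (P Q : Sylow l G), Nat.card G - Nat.card ((P : Subgroup G) ⊓ Q : Subgroup G) = k →
      ∃ c ∈ centralizer (((P : Subgroup G) ⊓ Q : Subgroup G) : Set G), c • P = Q := by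
  intro k
  induction k using Nat.strong_induction_on with
  | _ k ih =>
  intro P Q hk
  by_cases hPQ : P = Q
  · exact ⟨1, one_mem _, by rw [one_smul]; exact hPQ⟩
  set D := (P : Subgroup G) ⊓ Q with hD
  have hDp : IsPGroup l D := P.isPGroup'.to_le inf_le_left
  have hDP : D < P := by
    refine lt_of_le_of_ne inf_le_left fun he => hPQ ?_
    have : (P : Subgroup G) ≤ Q := he ▸ inf_le_right
    exact Sylow.ext (P.3 Q.isPGroup' this).symm
  have hDQ : D < Q := by
    refine lt_of_le_of_ne inf_le_right fun he => hPQ ?_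
    have : (Q : Subgroup G) ≤ P := he ▸ inf_le_left
    exact Sylow.ext (Q.3 P.isPGroup' this)
  have h1 := normalizer_grow P.isPGroup' hDP
  have h2 := normalizer_grow Q.isPGroup' hDQ
  set N := normalizer (D : Set G) with hN
  have key : ∀ X : Sylow l G, ∃ R : Sylow l G, ∃ S : Sylow l N, R.comap N.subtype = S ∧
      (X : Subgroup G) ⊓ N ≤ R := by
    intro X
    have hp : IsPGroup l ((X : Subgroup G).subgroupOf N) := X.isPGroup'.comap_subtype
    obtain ⟨S, hS⟩ := hp.exists_le_sylow
    obtain ⟨R, hR⟩ := S.exists_comap_subtype_eq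
    refine ⟨R, S, hR, ?_⟩
    rintro x ⟨hx, hxN⟩
    have : (⟨x, hxN⟩ : N) ∈ (S : Subgroup N) := hS (mem_subgroupOf.2 hx)
    rw [← hR] at this
    exact this
  obtain ⟨R, S, hRS, hR⟩ := key P
  obtain ⟨U, T, hUT, hU⟩ := key Q
  have grow : ∀ X Y : Sylow l G, D < (X : Subgroup G) ⊓ Y →
      ∃ c ∈ centralizer (D : Set G), c • X = Y := by
    intro X Y h
    have hc : Nat.card D < Nat.card ((X : Subgroup G) ⊓ Y : Subgroup G) :=
      Set.Finite.card_lt_card (Set.toFinite _) h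
    have hle : Nat.card ((X : Subgroup G) ⊓ Y : Subgroup G) ≤ Nat.card G := card_le_card_group _
    obtain ⟨c, hc1, hc2⟩ := ih _ (by omega) X Y rfl
    exact ⟨c, centralizer_le h.le hc1, hc2⟩
  obtain ⟨c1, hc1, e1⟩ := grow P R (h1.trans_le (le_inf inf_le_left hR))
  obtain ⟨c2, hc2, e2⟩ := grow Q U (h2.trans_le (le_inf inf_le_left hU))
  obtain ⟨c, hc, e⟩ := norm_conj hL D hDp S T
  obtain ⟨c3, hc3, e3⟩ := grow ((c : G) • R) U (h2.trans_le (le_inf (by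
    rintro x ⟨hx, hxN⟩
    have h3 : (⟨x, hxN⟩ : N) ∈ (T : Subgroup N) := by
      rw [← hUT]; exact hU ⟨hx, hxN⟩
    rw [← e] at h3
    have h4 := mem_sylow_smul.1 h3
    have h5 : c⁻¹ * ⟨x, hxN⟩ * c ∈ (S : Subgroup N) := h4
    rw [← hRS] at h5
    exact mem_sylow_smul.2 h5) hU))
  refine ⟨c2⁻¹ * c3 * c * c1, mul_mem (mul_mem (mul_mem (inv_mem hc2) hc3) hc) hc1, ?_⟩
  rw [mul_smul, mul_smul, mul_smul, e1, e3, ← e2, inv_smul_smul]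

theorem fusion_control {G : Type*} [Group G] [Finite G] {l : ℕ} [Fact l.Prime] (hL : LCond G l)
    (P : Sylow l G) (x u : G) (hx : x ∈ P) (hu : u * x * u⁻¹ ∈ P) :
    ∃ h ∈ P, u * x * u⁻¹ = h * x * h⁻¹ := by
  obtain ⟨c, hc, e⟩ := fusion hL _ P (u⁻¹ • P) rfl
  have hxD : x ∈ (P : Subgroup G) ⊓ (u⁻¹ • P : Sylow l G) :=
    ⟨hx, mem_sylow_smul.2 (by simpa using hu)⟩
  have hcx : x * c = c * x := mem_centralizer_iff.1 hc x hxD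
  have hn : u * c ∈ normalizer ((P : Subgroup G) : Set G) := by
    have h1 : (u * c) • P = P := by rw [mul_smul, e, smul_inv_smul]
    exact Sylow.smul_eq_iff_mem_normalizer.1 h1
  have hP : (P : Subgroup G) ≤ normalizer ((P : Subgroup G) : Set G) := le_normalizer
  have hC := cent_normal (P : Subgroup G)
  have htop := (sup_sylow_eq_top ((centralizer ((P : Subgroup G) : Set G)).subgroupOf
    (normalizer ((P : Subgroup G) : Set G))) (P.subtype hP) (by
      intro x s hs hsl ⟨k, hk⟩
      rw [mem_subgroupOf]
      exact hL P P.isPGroup' x x.2 s hs hsl ⟨k, by rwa [orderOf_coe]⟩))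
  have hm : (⟨u * c, hn⟩ : normalizer ((P : Subgroup G) : Set G)) ∈
      ((((centralizer ((P : Subgroup G) : Set G)).subgroupOf
    (normalizer ((P : Subgroup G) : Set G))) ⊔ (P.subtype hP : Subgroup _) : Subgroup _) : Set _) := by
    rw [htop]; trivial
  rw [normal_mul] at hm
  obtain ⟨z, hz, h, hh, e2⟩ := hm
  have hh' : (h : G) ∈ (P : Subgroup G) := hh
  have hz' : (z : G) ∈ centralizer ((P : Subgroup G) : Set G) := mem_subgroupOf.1 hz
  have e3 : (z : G) * h = u * c := congrArg Subtype.val e2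
  refine ⟨h, hh', ?_⟩
  have hy : (h : G) * x * (h : G)⁻¹ ∈ (P : Subgroup G) := mul_mem (mul_mem hh' hx) (inv_mem hh')
  have hzy := mem_centralizer_iff.1 hz' _ hy
  calc u * x * u⁻¹ = u * (x * c) * (u * c)⁻¹ := by group
    _ = (u * c) * x * (u * c)⁻¹ := by rw [hcx]; group
    _ = z * (h * x * (h : G)⁻¹) * (z : G)⁻¹ := by rw [← e3]; group
    _ = _ := by rw [← hzy]; group

open scoped commutatorElement in
theorem exists_l_quot {G : Type*} [Group G] [Finite G] {l : ℕ} [Fact l.Prime] (hL : LCond G l)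
    (hd : l ∣ Nat.card G) : ∃ K : Subgroup G, K.Normal ∧ K ≠ ⊤ ∧ ∃ n, K.index = l ^ n := by
  obtain ⟨P⟩ : Nonempty (Sylow l G) := inferInstance
  have hPnt : Nontrivial P := by
    rw [nontrivial_iff_ne_bot]; exact P.ne_bot_of_dvd_card hd
  have hle : (P : Subgroup G).focalSubgroupOf ≤ _root_.commutator P := by
    rw [focalSubgroupOf_eq_closure, closure_le]
    rintro g ⟨x, hx, u, hg⟩
    -- g = x u x⁻¹ u⁻¹
    have h1 : u * x⁻¹ * u⁻¹ ∈ P := by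
      have : u * x⁻¹ * u⁻¹ = x⁻¹ * g := by rw [hg, commutatorElement_def]; group
      rw [this]
      exact (P : Subgroup G).mul_mem (inv_mem hx) g.2
    obtain ⟨h, hh, e⟩ := fusion_control hL P x⁻¹ u (inv_mem hx) h1
    have : g = ⁅(⟨x, hx⟩ : (P : Subgroup G)), (⟨h, hh⟩ : (P : Subgroup G))⁆ := by
      ext
      rw [hg, commutatorElement_def, mul_assoc, mul_assoc, ← mul_assoc u, e]
      simp [commutatorElement_def, mul_assoc]
    rw [this]
    exact commutator_mem_commutator (mem_top _) (mem_top _)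
  have hPn : Group.IsNilpotent P := P.isPGroup'.isNilpotent
  have hlt : _root_.commutator P < ⊤ := Group.IsSolvable.commutator_lt_top_of_nontrivial P
  refine ⟨(P : Subgroup G).transferFocal.ker, inferInstance, ?_, ?_⟩
  · intro htop
    have := ker_transferFocal_inf_eq_focalSubgroup P
    rw [htop, top_inf_eq] at this
    have h2 : (P : Subgroup G).focalSubgroupOf = ⊤ := by
      rw [focalSubgroupOf_def, ← this, subgroupOf_self]
    rw [h2] at hle
    exact hlt.not_ge hle
  · have e := transferFocal.quotientKerMulEquivQuotientFocalSubroupOf P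
    rw [Subgroup.index, Nat.card_congr e.toEquiv]
    exact (IsPGroup.iff_card.1 (P.isPGroup'.to_quotient _))

theorem lcond_of_mns {G : Type*} [Group G] [Finite G] (hG : ∀ H : Subgroup G, H ≠ ⊤ → IsSupersoluble H)
    {l : ℕ} [hl : Fact l.Prime] (hmin : ∀ s : ℕ, s.Prime → s ∣ Nat.card G → l ≤ s)
    (h3 : ∀ s : ℕ, ∃ t : ℕ, t.Prime ∧ t ∣ Nat.card G ∧ t ≠ l ∧ t ≠ s) : LCond G l := by
  intro D hD x hx s hs hsl ⟨k, hk⟩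
  have hDT : D ≤ D ⊔ zpowers x := le_sup_left
  have hxT : x ∈ D ⊔ zpowers x := mem_sup_right (mem_zpowers x)
  have hTn : D ⊔ zpowers x ≤ normalizer (D : Set G) :=
    sup_le le_normalizer (by rwa [zpowers_le])
  obtain ⟨m, hm⟩ := IsPGroup.iff_card.1 hD
  have hT : D ⊔ zpowers x ≠ ⊤ := by
    intro htop
    rw [htop, top_le_iff, normalizer_eq_top_iff] at hTn
    obtain ⟨t, ht, htd, htl, hts⟩ := h3 s
    rw [← D.card_mul_index, ht.dvd_mul] at htd
    rcases htd with h | h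
    · rw [hm] at h
      exact htl ((Nat.prime_dvd_prime_iff_eq ht hl.out).1 (ht.dvd_of_dvd_pow h))
    · have h4 : zpowers (QuotientGroup.mk' D x) = ⊤ := by
        have := congrArg (Subgroup.map (QuotientGroup.mk' D)) htop
        rw [Subgroup.map_sup, QuotientGroup.map_mk'_self, bot_sup_eq, MonoidHom.map_zpowers,
          Subgroup.map_top_of_surjective _ (QuotientGroup.mk'_surjective D)] at this
        exact this
      have h5 : D.index = orderOf (QuotientGroup.mk' D x) := by
        rw [Subgroup.index, ← Nat.card_zpowers, h4, card_top]
      have h6 : t ∣ s ^ k := by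
        rw [← hk]; rw [h5] at h; exact h.trans (orderOf_map_dvd _ x)
      exact hts ((Nat.prime_dvd_prime_iff_eq ht hs).1 (ht.dvd_of_dvd_pow h6))
  obtain ⟨N, hN, hN1, hN2⟩ := ss_hall (l + 1) _ _ rfl (hG _ hT)
  have hDn : (D.subgroupOf (D ⊔ zpowers x)).Normal := by
    rw [normal_subgroupOf_iff hDT]
    intro h k hh hk
    exact (mem_normalizer_iff.1 (hTn hk) h).1 hh
  have hxN : (⟨x, hxT⟩ : ↥(D ⊔ zpowers x)) ∈ N := by
    refine mem_of_pow_coprime hN (m := orderOf x) (by ext; simp [pow_orderOf_eq_one]) ?_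
    refine Nat.coprime_of_dvd fun t ht h1 h2 => ?_
    rw [hk] at h1
    have h4 : t = s := (Nat.prime_dvd_prime_iff_eq ht hs).1 (ht.dvd_of_dvd_pow h1)
    have h5 := hN2 t ht h2
    have h6 := hmin t ht ((h2.trans (index_dvd_card N)).trans (card_subgroup_dvd_card _))
    omega
  have hdis : Disjoint N (D.subgroupOf (D ⊔ zpowers x)) := by
    apply disjoint_of_coprime_natCard
    rw [Nat.card_congr (subgroupOfEquivOfLe hDT).toEquiv, hm]
    refine Nat.Coprime.pow_right _ (Nat.Coprime.symm ?_)
    rw [hl.out.coprime_iff_not_dvd]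
    intro h; have := hN1 l hl.out h; omega
  rw [mem_centralizer_iff]
  intro d hd
  have := commute_of_normal_of_disjoint _ _ hN hDn hdis _ (⟨d, hDT hd⟩) hxN (mem_subgroupOf.2 hd)
  exact (congrArg Subtype.val this.eq).symm

theorem stepA {G : Type*} [Group G] [Finite G] (hG : ∀ H : Subgroup G, H ≠ ⊤ → IsSupersoluble H)
    {l : ℕ} (hl : l.Prime) (hd : l ∣ Nat.card G) (hmin : ∀ s : ℕ, s.Prime → s ∣ Nat.card G → l ≤ s)
    (h3 : ∀ s : ℕ, ∃ t : ℕ, t.Prime ∧ t ∣ Nat.card G ∧ t ≠ l ∧ t ≠ s) :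
    ∃ K : Subgroup G, K.Normal ∧ ¬ l ∣ Nat.card K ∧ ∀ s : ℕ, s.Prime → s ∣ K.index → s = l := by
  have : Fact l.Prime := ⟨hl⟩
  obtain ⟨K, hK, hKt, n, hn⟩ := exists_l_quot (lcond_of_mns hG hmin h3) hd
  obtain ⟨L, hL, hL1, hL2⟩ := ss_hall (l + 1) _ _ rfl (hG _ hKt)
  have hc : Nat.card (L.map K.subtype) = Nat.card L :=
    Nat.card_congr (L.equivMapOfInjective _ K.subtype_injective).symm.toEquiv
  refine ⟨L.map K.subtype, normal_map_of_coprime hK hL ?_, ?_, ?_⟩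
  · refine Nat.coprime_of_dvd fun t ht h1 h2 => ?_
    have := hL1 t ht h1
    have := hL2 t ht h2
    omega
  · rw [hc]; intro h; have := hL1 l hl h; omega
  · intro s hs h
    rw [index_map_subtype, hs.dvd_mul] at h
    rcases h with h | h
    · have h5 := hL2 s hs h
      have h6 := hmin s hs ((h.trans (index_dvd_card L)).trans (card_subgroup_dvd_card _))
      omega
    · rw [hn] at h
      exact (Nat.prime_dvd_prime_iff_eq hs hl).1 (hs.dvd_of_dvd_pow h)


theorem ore_card {G : Type*} [Group G] [Finite G] (N : Subgroup G) (p : ℕ)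
    (h1 : ∀ l : ℕ, l.Prime → l ∣ Nat.card N → p ≤ l)
    (h2 : ∀ l : ℕ, l.Prime → l ∣ N.index → l < p) :
    Nat.card N = ∏ q ∈ (Nat.card G).primeFactors.filter (fun q => p ≤ q),
        q ^ (Nat.card G).factorization q := by
  have hN0 : Nat.card N ≠ 0 := Nat.card_pos.ne'
  have hi0 : N.index ≠ 0 := N.index_ne_zero_of_finite
  have hG0 : Nat.card G ≠ 0 := Nat.card_pos.ne'
  have hmul := N.card_mul_index
  have hpf : (Nat.card G).primeFactors.filter (fun q => p ≤ q) = (Nat.card N).primeFactors := by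
    ext q
    simp only [Finset.mem_filter, Nat.mem_primeFactors]
    constructor
    · rintro ⟨⟨hq, hd, -⟩, hpq⟩
      refine ⟨hq, ?_, hN0⟩
      rw [← hmul, hq.dvd_mul] at hd
      rcases hd with h | h
      · exact h
      · have := h2 q hq h; omega
    · rintro ⟨hq, hd, -⟩
      exact ⟨⟨hq, hd.trans (card_subgroup_dvd_card N), hG0⟩, h1 q hq hd⟩
  rw [hpf]
  conv_lhs => rw [← Nat.prod_factorization_pow_eq_self hN0]
  rw [Nat.prod_factorization_eq_prod_primeFactors]
  refine Finset.prod_congr rfl fun q hq => ?_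
  rw [← hmul, Nat.factorization_mul hN0 hi0]
  have hq' := Nat.mem_primeFactors.1 hq
  have : N.index.factorization q = 0 := by
    apply Nat.factorization_eq_zero_of_not_dvd
    intro h
    have := h2 q hq'.1 h
    have := h1 q hq'.1 hq'.2.1
    omega
  simp [this]

theorem IsSylowSubgroup.eq_of_le {G : Type*} [Group G] [Finite G] {p : ℕ} (hp : p.Prime)
    {H K : Subgroup G} (h : IsSylowSubgroup p H) (hK : IsPGroup p K) (hle : H ≤ K) : H = K := by
  have : Fact p.Prime := ⟨hp⟩
  exact ((h.1.toSylow h.2).3 hK hle).symm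

theorem IsSylowSubgroup.le_normal {G : Type*} [Group G] [Finite G] {p : ℕ} (hp : p.Prime)
    {H N : Subgroup G} (h : IsPGroup p H) (hN : N.Normal) (hi : ¬ p ∣ N.index) : H ≤ N := by
  intro x hx
  have : Fact p.Prime := ⟨hp⟩
  obtain ⟨k, hk⟩ := h ⟨x, hx⟩
  have hk' : x ^ p ^ k = 1 := by simpa using congrArg Subtype.val hk
  exact mem_of_pow_coprime hN hk' (Nat.Coprime.pow_left _ ((hp.coprime_iff_not_dvd).2 hi))

theorem IsSylowSubgroup.prime_dvd {G : Type*} [Group G] [Finite G] {p : ℕ} (hp : p.Prime)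
    {H : Subgroup G} (h : IsPGroup p H) {t : ℕ} (ht : t.Prime) (hd : t ∣ Nat.card H) : t = p := by
  have : Fact p.Prime := ⟨hp⟩
  obtain ⟨k, hk⟩ := IsPGroup.iff_card.1 h
  rw [hk] at hd
  exact (Nat.prime_dvd_prime_iff_eq ht hp).1 (ht.dvd_of_dvd_pow hd)

theorem isPGroup_of_prime_dvd {G : Type*} [Group G] [Finite G] {p : ℕ} (hp : p.Prime)
    (h : ∀ t : ℕ, t.Prime → t ∣ Nat.card G → t = p) : IsPGroup p G := by
  have : Fact p.Prime := ⟨hp⟩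
  exact IsPGroup.iff_card.2 ⟨_, Nat.eq_prime_pow_of_unique_prime_dvd Nat.card_pos.ne' (fun {d} => h d)⟩

/-- the consequences of Step A -/
theorem stepA' {G : Type*} [Group G] [Finite G] (hG : ∀ H : Subgroup G, H ≠ ⊤ → IsSupersoluble H)
    {p₁ p₂ p₃ : ℕ} (hp₁ : p₁.Prime) (hp₂ : p₂.Prime) (hp₃ : p₃.Prime)
    (h12 : p₁ > p₂) (h23 : p₂ > p₃)
    (hπ : (Nat.card G).primeFactors = {p₁, p₂, p₃})
    {P₁ P₂ P₃ : Subgroup G}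
    (hP₁ : IsSylowSubgroup p₁ P₁) (hP₂ : IsSylowSubgroup p₂ P₂)
    (hP₃ : IsSylowSubgroup p₃ P₃) :
    P₁.Normal ∧ (P₁ ⊔ P₂).Normal ∧ ¬ p₃ ∣ Nat.card (P₁ ⊔ P₂ : Subgroup G) ∧
      (∀ s : ℕ, s.Prime → s ∣ (P₁ ⊔ P₂).index → s = p₃) ∧ P₁ ⊔ P₂ ⊔ P₃ = ⊤ := by
  have hG0 : Nat.card G ≠ 0 := Nat.card_pos.ne'
  have hpi : ∀ s : ℕ, s.Prime → s ∣ Nat.card G → s = p₁ ∨ s = p₂ ∨ s = p₃ := by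
    intro s hs hd
    have : s ∈ (Nat.card G).primeFactors := Nat.mem_primeFactors.2 ⟨hs, hd, hG0⟩
    simpa [hπ] using this
  have hd1 : p₁ ∣ Nat.card G := Nat.dvd_of_mem_primeFactors (by simp [hπ])
  have hd2 : p₂ ∣ Nat.card G := Nat.dvd_of_mem_primeFactors (by simp [hπ])
  have hd3 : p₃ ∣ Nat.card G := Nat.dvd_of_mem_primeFactors (by simp [hπ])
  obtain ⟨K, hK, hK1, hK2⟩ := stepA hG hp₃ hd3
    (by intro s hs hd; rcases hpi s hs hd with h | h | h <;> omega)
    (by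
      intro s
      by_cases hs : s = p₁
      · exact ⟨p₂, hp₂, hd2, by omega, by omega⟩
      · exact ⟨p₁, hp₁, hd1, by omega, fun h => hs h.symm⟩)
  have hKt : K ≠ ⊤ := by
    rintro rfl; rw [card_top] at hK1; exact hK1 hd3
  have hle1 : P₁ ≤ K := IsSylowSubgroup.le_normal hp₁ hP₁.1 hK (fun h => by
    have := hK2 _ hp₁ h; omega)
  have hle2 : P₂ ≤ K := IsSylowSubgroup.le_normal hp₂ hP₂.1 hK (fun h => by
    have := hK2 _ hp₂ h; omega)
  obtain ⟨L, hL, hL1, hL2⟩ := ss_hall p₁ _ _ rfl (hG _ hKt)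
  have hc : Nat.card (L.map K.subtype) = Nat.card L :=
    Nat.card_congr (L.equivMapOfInjective _ K.subtype_injective).symm.toEquiv
  have hLn : (L.map K.subtype).Normal := by
    refine normal_map_of_coprime hK hL ?_
    refine Nat.coprime_of_dvd fun t ht h1 h2 => ?_
    have := hL1 t ht h1
    have := hL2 t ht h2
    omega
  have hLp : IsPGroup p₁ (L.map K.subtype) := by
    refine isPGroup_of_prime_dvd hp₁ fun t ht h => ?_
    have h5 := hpi t ht (h.trans (card_subgroup_dvd_card _))
    rw [hc] at h
    have := hL1 t ht h
    omega
  have hle3 : P₁ ≤ L.map K.subtype := IsSylowSubgroup.le_normal hp₁ hP₁.1 hLn (fun h => by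
    rw [index_map_subtype, hp₁.dvd_mul] at h
    rcases h with h | h
    · have := hL2 _ hp₁ h; omega
    · have := hK2 _ hp₁ h; omega)
  have hP1n : P₁.Normal := by
    rw [hP₁.eq_of_le hp₁ hLp hle3]; exact hLn
  have hKeq : P₁ ⊔ P₂ = K := by
    refine le_antisymm (sup_le hle1 hle2) ?_
    rw [← relIndex_eq_one]
    by_contra hne
    obtain ⟨t, ht, htd⟩ := Nat.exists_prime_and_dvd hne
    have h1 : t ∣ (P₁ ⊔ P₂).index := htd.trans ⟨_, (relIndex_mul_index (sup_le hle1 hle2)).symm⟩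
    have h2 : t ∣ Nat.card K := htd.trans (index_dvd_card _)
    rcases hpi t ht (h2.trans (card_subgroup_dvd_card K)) with rfl | rfl | rfl
    · exact hP₁.2 (h1.trans (index_dvd_of_le le_sup_left))
    · exact hP₂.2 (h1.trans (index_dvd_of_le le_sup_right))
    · exact hK1 h2
  rw [hKeq]
  refine ⟨hP1n, hK, hK1, hK2, ?_⟩
  rw [← index_eq_one]
  by_contra hne
  obtain ⟨t, ht, htd⟩ := Nat.exists_prime_and_dvd hne
  have h1 := hK2 t ht (htd.trans (index_dvd_of_le le_sup_left))
  rw [h1] at htd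
  exact hP₃.2 (htd.trans (index_dvd_of_le le_sup_right))

theorem ore_of {G : Type*} [Group G] [Finite G]
    {p₁ p₂ p₃ : ℕ} (hp₁ : p₁.Prime) (hp₂ : p₂.Prime) (hp₃ : p₃.Prime)
    (h12 : p₁ > p₂) (h23 : p₂ > p₃)
    (hπ : (Nat.card G).primeFactors = {p₁, p₂, p₃})
    {P₁ K : Subgroup G} (hP₁ : IsSylowSubgroup p₁ P₁) (hn : P₁.Normal) (hK : K.Normal)
    (hK1 : ¬ p₃ ∣ Nat.card K) (hK2 : ∀ s : ℕ, s.Prime → s ∣ K.index → s = p₃) :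
    OreDispersive G := by
  have hG0 : Nat.card G ≠ 0 := Nat.card_pos.ne'
  have hpi : ∀ s : ℕ, s.Prime → s ∣ Nat.card G → s = p₁ ∨ s = p₂ ∨ s = p₃ := by
    intro s hs hd
    have : s ∈ (Nat.card G).primeFactors := Nat.mem_primeFactors.2 ⟨hs, hd, hG0⟩
    simpa [hπ] using this
  intro p hp
  by_cases h3 : p ≤ p₃
  · refine ⟨⊤, inferInstance, ore_card _ _ ?_ ?_⟩
    · intro l hl hd
      rw [card_top] at hd
      have := hpi l hl hd
      omega
    · intro l hl hd
      rw [index_top, Nat.dvd_one] at hd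
      exact absurd hd hl.ne_one
  by_cases h2 : p ≤ p₂
  · refine ⟨K, hK, ore_card _ _ ?_ ?_⟩
    · intro l hl hd
      rcases hpi l hl (hd.trans (card_subgroup_dvd_card K)) with rfl | rfl | rfl
      · omega
      · omega
      · exact absurd hd hK1
    · intro l hl hd
      have := hK2 l hl hd
      omega
  by_cases h1 : p ≤ p₁
  · refine ⟨P₁, hn, ore_card _ _ ?_ ?_⟩
    · intro l hl hd
      have := IsSylowSubgroup.prime_dvd hp₁ hP₁.1 hl hd
      omega
    · intro l hl hd
      rcases hpi l hl (hd.trans (index_dvd_card P₁)) with rfl | rfl | rfl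
      · exact absurd hd hP₁.2
      · omega
      · omega
  · refine ⟨⊥, inferInstance, ore_card _ _ ?_ ?_⟩
    · intro l hl hd
      rw [card_bot, Nat.dvd_one] at hd
      exact absurd hd hl.ne_one
    · intro l hl hd
      rw [index_bot] at hd
      have := hpi l hl hd
      omega


theorem maschke_add {A H : Type*} [AddCommGroup A] [Group H] [Finite H] {p : ℕ} [Fact p.Prime]
    [Module (ZMod p) A] (hH : ¬ p ∣ Nat.card H) (φ : H → (A →+ A))
    (hφ : ∀ x y a, φ (x * y) a = φ x (φ y a)) (h1 : ∀ a, φ 1 a = a)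
    (L : AddSubgroup A) (hL : ∀ h, ∀ a ∈ L, φ h a ∈ L) :
    ∃ M : AddSubgroup A, (∀ h, ∀ a ∈ M, φ h a ∈ M) ∧ L ⊔ M = ⊤ ∧ L ⊓ M = ⊥ := by
  have hne : NeZero (Nat.card H : ZMod p) := ⟨by
    rw [Ne, ZMod.natCast_eq_zero_iff]; exact hH⟩
  let ρ : Representation (ZMod p) H A :=
    { toFun := fun h => (φ h).toZModLinearMap p
      map_one' := LinearMap.ext h1
      map_mul' := fun x y => LinearMap.ext (hφ x y) }
  let W : Subrepresentation ρ := ⟨AddSubgroup.toZModSubmodule p L, by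
    intro h v hv
    exact hL h v hv⟩
  obtain ⟨W', hW'⟩ := (inferInstance : ComplementedLattice (Subrepresentation ρ)).exists_isCompl W
  refine ⟨W'.toSubmodule.toAddSubgroup, ?_, ?_, ?_⟩
  · intro h a ha
    exact W'.apply_mem_toSubmodule h ha
  · rw [eq_top_iff]
    intro a _
    have h1 : W.toSubmodule ⊔ W'.toSubmodule = ⊤ :=
      congrArg Subrepresentation.toSubmodule hW'.sup_eq_top
    have h2 : a ∈ W.toSubmodule ⊔ W'.toSubmodule := by rw [h1]; trivial
    obtain ⟨y, hy, z, hz, e⟩ := Submodule.mem_sup.1 h2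
    rw [← e]
    exact add_mem (AddSubgroup.mem_sup_left hy) (AddSubgroup.mem_sup_right hz)
  · rw [eq_bot_iff]
    intro a ha
    have h1 : W.toSubmodule ⊓ W'.toSubmodule = ⊥ :=
      congrArg Subrepresentation.toSubmodule hW'.inf_eq_bot
    have h2 : a ∈ W.toSubmodule ⊓ W'.toSubmodule := ⟨ha.1, ha.2⟩
    rw [h1, Submodule.mem_bot] at h2
    exact h2

theorem maschke_abs {A H : Type*} [CommGroup A] [Group H] [Finite H] {p : ℕ} (hp : p.Prime)
    (hA : ∀ a : A, a ^ p = 1) (hH : ¬ p ∣ Nat.card H) (φ : H →* MulAut A)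
    (L : Subgroup A) (hL : ∀ h, ∀ a ∈ L, φ h a ∈ L) :
    ∃ M : Subgroup A, (∀ h, ∀ a ∈ M, φ h a ∈ M) ∧ L ⊔ M = ⊤ ∧ L ⊓ M = ⊥ := by
  have : Fact p.Prime := ⟨hp⟩
  let _ : Module (ZMod p) (Additive A) := AddCommGroup.zmodModule (n := p) (fun x => by
    exact congrArg Additive.ofMul (hA x.toMul))
  obtain ⟨M, hM, h1, h2⟩ := maschke_add (A := Additive A) hH
    (fun h => (MonoidHom.toAdditive (φ h).toMonoidHom))
    (by intro x y a; simp) (by intro a; simp) (Subgroup.toAddSubgroup L) (fun h a ha => hL h a.toMul ha)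
  refine ⟨AddSubgroup.toSubgroup' M, fun h a ha => hM h _ ha, ?_, ?_⟩
  · rw [eq_top_iff]
    intro a _
    have h3 : Additive.ofMul a ∈ Subgroup.toAddSubgroup L ⊔ M := by rw [h1]; trivial
    obtain ⟨y, hy, z, hz, e⟩ := AddSubgroup.mem_sup.1 h3
    have e' : a = y.toMul * z.toMul := (congrArg Additive.toMul e).symm
    rw [e']
    exact mul_mem (mem_sup_left hy) (mem_sup_right hz)
  · rw [eq_bot_iff]
    intro a ha
    have h3 : Additive.ofMul a ∈ Subgroup.toAddSubgroup L ⊓ M := ⟨ha.1, ha.2⟩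
    rw [h2, AddSubgroup.mem_bot] at h3
    exact h3

theorem maschke_grp {G : Type*} [Group G] [Finite G] {p : ℕ} (hp : p.Prime)
    {V : Subgroup G} (hV : V.Normal) (hcomm : ∀ x ∈ V, ∀ y ∈ V, x * y = y * x)
    (hexp : ∀ x ∈ V, x ^ p = 1) (hi : ¬ p ∣ V.index) {L : Subgroup G} (hL : L.Normal) (hLV : L ≤ V) :
    ∃ M : Subgroup G, M.Normal ∧ M ≤ V ∧ L ⊔ M = V ∧ L ⊓ M = ⊥ := by
  have : Fact p.Prime := ⟨hp⟩
  have hVp : IsPGroup p V := fun x => ⟨1, by ext; simpa using hexp x x.2⟩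
  obtain ⟨k, hk⟩ := IsPGroup.iff_card.1 hVp
  obtain ⟨H, hH⟩ := exists_right_complement'_of_coprime (N := V) (by
    rw [hk]; exact Nat.Coprime.pow_left _ (hp.coprime_iff_not_dvd.2 hi))
  let _ : CommGroup V := { (inferInstance : Group V) with
    mul_comm := fun x y => Subtype.ext (hcomm x x.2 y y.2) }
  obtain ⟨M, hM, h1, h2⟩ := maschke_abs (A := V) (H := H) hp
    (fun a => Subtype.ext (hexp a a.2))
    (by rw [← hH.symm.index_eq_card]; exact hi)
    ((MulAut.conjNormal : G →* MulAut V).comp H.subtype) (L.subgroupOf V)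
    (by
      intro h a ha
      rw [mem_subgroupOf] at ha ⊢
      simpa using hL.conj_mem _ ha h)
  refine ⟨M.map V.subtype, ?_, map_subtype_le M, ?_, ?_⟩
  · rw [← normalizer_eq_top_iff, eq_top_iff, ← hH.sup_eq_top, sup_le_iff]
    constructor
    · intro v hv
      rw [mem_normalizer_iff]
      have hfix : ∀ x ∈ V, v * x * v⁻¹ = x := fun x hx => by rw [hcomm v hv x hx]; group
      intro x
      constructor
      · rintro ⟨y, hy, rfl⟩
        rw [V.coe_subtype, hfix y y.2]; exact ⟨y, hy, rfl⟩
      · intro hx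
        have hxV : v * x * v⁻¹ ∈ V := map_subtype_le M hx
        have hxV' : x ∈ V := by
          have := V.mul_mem (V.mul_mem (V.inv_mem hv) hxV) hv
          simpa [mul_assoc] using this
        rwa [hfix x hxV'] at hx
    · have key : ∀ h ∈ H, ∀ x ∈ M.map V.subtype, h * x * h⁻¹ ∈ M.map V.subtype := by
        rintro h hh _ ⟨y, hy, rfl⟩
        exact ⟨_, hM ⟨h, hh⟩ y hy, by simp⟩
      intro h hh
      rw [mem_normalizer_iff]
      refine fun x => ⟨key h hh x, fun hx => ?_⟩
      have := key h⁻¹ (H.inv_mem hh) _ hx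
      simpa [mul_assoc] using this
  · have := congrArg (Subgroup.map V.subtype) h1
    rwa [Subgroup.map_sup, map_subgroupOf_eq_of_le hLV, ← MonoidHom.range_eq_map, range_subtype] at this
  · rw [eq_bot_iff]
    rintro x ⟨hx, y, hy, rfl⟩
    have : y ∈ L.subgroupOf V ⊓ M := ⟨hx, hy⟩
    rw [h2, mem_bot] at this
    rw [this]; simp

theorem frattiniIn_le {G : Type*} [Group G] (P : Subgroup G) : frattiniIn P ≤ P := map_subtype_le _

theorem frattiniIn_normal {G : Type*} [Group G] {P : Subgroup G} (hP : P.Normal) :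
    (frattiniIn P).Normal := ConjAct.normal_of_characteristic_of_normal

theorem frattiniIn_nongen {G : Type*} [Group G] [Finite G] {P H : Subgroup G} (hH : H ≤ P)
    (h : P ≤ H ⊔ frattiniIn P) : H = P := by
  refine le_antisymm hH ?_
  rw [← subgroupOf_eq_top]
  apply frattini_nongenerating
  apply Subgroup.map_injective P.subtype_injective
  rw [Subgroup.map_sup, map_subgroupOf_eq_of_le hH, ← MonoidHom.range_eq_map, range_subtype]
  exact le_antisymm (sup_le hH (frattiniIn_le P)) h

theorem mem_frattiniIn {G : Type*} [Group G] {P : Subgroup G} {x : G} (hx : x ∈ P)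
    (h : ∀ M : Subgroup P, IsCoatom M → ⟨x, hx⟩ ∈ M) : x ∈ frattiniIn P := by
  refine ⟨⟨x, hx⟩, ?_, rfl⟩
  have : (⟨x, hx⟩ : P) ∈ frattini P := by
    simpa [frattini, Order.radical, mem_iInf] using h
  exact this

theorem coatom_pgroup {G : Type*} [Group G] [Finite G] {p : ℕ} (hp : p.Prime) (hG : IsPGroup p G)
    {M : Subgroup G} (hM : IsCoatom M) : M.Normal ∧ (∀ x, x ^ p ∈ M) ∧ 
      ∀ x y, x * y * x⁻¹ * y⁻¹ ∈ M := by
  have : Fact p.Prime := ⟨hp⟩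
  have h1 : Group.IsNilpotent G := hG.isNilpotent
  have hn : M.Normal := Group.normalizerCondition_of_isNilpotent.normal_of_coatom _ hM
  have key : ∀ x, x ∉ M → ∀ y, ∃ m ∈ M, ∃ k : ℤ, y = m * x ^ k := by
    intro x hx y
    apply mem_sup_zpowers hn
    have : M < M ⊔ zpowers x := lt_of_le_of_ne le_sup_left fun h => hx (by
      rw [h]; exact mem_sup_right (mem_zpowers x))
    rw [hM.2 _ this]; trivial
  refine ⟨hn, fun x => ?_, fun x y => ?_⟩
  · by_contra hx
    obtain ⟨m, hm, k, e⟩ := key _ hx x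
    obtain ⟨n, hn⟩ := hG x
    have h2 : x ^ (1 - p * k : ℤ) ∈ M := by
      have : x ^ (1 - p * k : ℤ) = m := by
        rw [zpow_sub, zpow_one, zpow_mul, zpow_natCast]
        conv_lhs => enter [1]; rw [e]
        group
      rwa [this]
    have hc : IsCoprime (1 - p * k : ℤ) ((p ^ n : ℕ) : ℤ) := by
      push_cast
      exact IsCoprime.pow_right ⟨1, k, by ring⟩
    obtain ⟨a, b, hab⟩ := hc
    have h3 : x ∈ M := by
      have e2 : x = (x ^ (1 - p * k : ℤ)) ^ a * (x ^ (p ^ n)) ^ b := by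
        rw [← zpow_mul, ← zpow_natCast, ← zpow_mul, ← zpow_add, mul_comm _ a, mul_comm _ b, hab,
          zpow_one]
      rw [hn, one_zpow, mul_one] at e2
      rw [e2]; exact M.zpow_mem h2 a
    exact hx (M.pow_mem h3 p)
  · by_cases hy : y ∈ M
    · exact M.mul_mem (hn.conj_mem y hy x) (M.inv_mem hy)
    · obtain ⟨m, hm, k, e⟩ := key y hy x
      have : x * y * x⁻¹ * y⁻¹ = m * (y * m⁻¹ * y⁻¹) := by rw [e]; group
      rw [this]
      exact M.mul_mem hm (hn.conj_mem _ (M.inv_mem hm) y)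

theorem pow_mem_frattiniIn {G : Type*} [Group G] [Finite G] {p : ℕ} (hp : p.Prime) {P : Subgroup G}
    (hP : IsPGroup p P) {x : G} (hx : x ∈ P) : x ^ p ∈ frattiniIn P :=
  mem_frattiniIn (P.pow_mem hx p) fun _ hM => (coatom_pgroup hp hP hM).2.1 ⟨x, hx⟩

theorem comm_mem_frattiniIn {G : Type*} [Group G] [Finite G] {p : ℕ} (hp : p.Prime) {P : Subgroup G}
    (hP : IsPGroup p P) {x y : G} (hx : x ∈ P) (hy : y ∈ P) : x * y * x⁻¹ * y⁻¹ ∈ frattiniIn P :=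
  mem_frattiniIn (P.mul_mem (P.mul_mem (P.mul_mem hx hy) (P.inv_mem hx)) (P.inv_mem hy))
    fun _ hM => (coatom_pgroup hp hP hM).2.2 ⟨x, hx⟩ ⟨y, hy⟩

/-- Maschke for the Frattini quotient -/
theorem maschke_frattini {G : Type*} [Group G] [Finite G] {p : ℕ} (hp : p.Prime)
    {P : Subgroup G} (hP : P.Normal) (hPp : IsPGroup p P) (hi : ¬ p ∣ P.index)
    {L : Subgroup G} (hL : L.Normal) (hLP : L ≤ P) (hLF : ¬ L ≤ frattiniIn P) :
    ∃ M : Subgroup G, M.Normal ∧ M ≤ P ∧ M ≠ P ∧ L ⊔ M = P := by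
  have hF := frattiniIn_normal hP
  set F := frattiniIn P with hFdef
  have hs := QuotientGroup.mk'_surjective F
  have hFP : F ≤ P := frattiniIn_le P
  have hiV : (P.map (QuotientGroup.mk' F)).index = P.index := by
    rw [index_map_eq _ hs (by rw [QuotientGroup.ker_mk']; exact hFP)]
  obtain ⟨M, hM, hMV, h1, h2⟩ := maschke_grp hp (V := P.map (QuotientGroup.mk' F))
    (hP.map _ hs)
    (by
      rintro _ ⟨x, hx, rfl⟩ _ ⟨y, hy, rfl⟩
      rw [← map_mul, ← map_mul, QuotientGroup.mk'_eq_mk']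
      refine ⟨_, comm_mem_frattiniIn hp hPp (P.inv_mem hy) (P.inv_mem hx), ?_⟩
      group)
    (by
      rintro _ ⟨x, hx, rfl⟩
      rw [← map_pow]
      exact (QuotientGroup.eq_one_iff _).2 (pow_mem_frattiniIn hp hPp hx))
    (by rwa [hiV]) (L := L.map (QuotientGroup.mk' F)) (hL.map _ hs) (Subgroup.map_mono hLP)
  have hFM : F ≤ M.comap (QuotientGroup.mk' F) := by
    have := MonoidHom.ker_le_comap (QuotientGroup.mk' F) M
    rwa [QuotientGroup.ker_mk'] at this
  have hMP : M.comap (QuotientGroup.mk' F) ≤ P := by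
    have := Subgroup.comap_mono (f := QuotientGroup.mk' F) hMV
    rwa [comap_map_eq_self (by rw [QuotientGroup.ker_mk']; exact hFP)] at this
  refine ⟨M.comap (QuotientGroup.mk' F), hM.comap _, hMP, ?_, ?_⟩
  · intro he
    apply hLF
    intro x hx
    have h4 : x ∈ M.comap (QuotientGroup.mk' F) := by rw [he]; exact hLP hx
    have h3 : QuotientGroup.mk' F x ∈ L.map (QuotientGroup.mk' F) ⊓ M :=
      ⟨mem_map_of_mem _ hx, h4⟩
    rw [h2, mem_bot] at h3
    exact (QuotientGroup.eq_one_iff _).1 h3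
  · apply Subgroup.map_injective_of_ker_le (QuotientGroup.mk' F)
    · rw [QuotientGroup.ker_mk']; exact hFM.trans le_sup_right
    · rw [QuotientGroup.ker_mk']; exact hFP
    · rw [Subgroup.map_sup, map_comap_eq_self_of_surjective hs, h1]


theorem compl_ne_top {G : Type*} [Group G] [Finite G] {P H : Subgroup G} (h : IsComplement' P H)
    (hne : P ≠ ⊥) : H ≠ ⊤ := by
  intro e
  have := h.disjoint
  rw [e, disjoint_top] at this
  exact hne this

theorem ss_quot_of_compl {G : Type*} [Group G] {P H : Subgroup G} [P.Normal]
    (h : P ⊔ H = ⊤) (hH : IsSupersoluble H) : IsSupersoluble (G ⧸ P) := by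
  refine ss_map ((QuotientGroup.mk' P).comp H.subtype) ?_ hH
  intro g
  obtain ⟨g, rfl⟩ := QuotientGroup.mk'_surjective P g
  have hg : g ∈ P ⊔ H := by rw [h]; trivial
  rw [sup_comm, ← SetLike.mem_coe, mul_normal] at hg
  obtain ⟨x, hx, y, hy, rfl⟩ := hg
  refine ⟨⟨x, hx⟩, ?_⟩
  have : QuotientGroup.mk' P y = 1 := (QuotientGroup.eq_one_iff y).2 hy
  simpa using hy

theorem pgroup_inf_centralizer {G : Type*} [Group G] [Finite G] {p : ℕ} (hp : p.Prime)
    {P L : Subgroup G} (hP : IsPGroup p P) (hL : L.Normal) (hLP : L ≤ P) (hne : L ≠ ⊥) :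
    L ⊓ centralizer (P : Set G) ≠ ⊥ := by
  have : Fact p.Prime := ⟨hp⟩
  let act : MulAction P L := MulAction.compHom L ((MulAut.conjNormal : G →* MulAut L).comp P.subtype)
  have hsm : ∀ (x : P) (a : L), ((x • a : L) : G) = x * a * (x : G)⁻¹ := fun x a => by
    change ((MulAut.conjNormal (x : G) a : L) : G) = _
    simp
  have hLp : IsPGroup p L := hP.to_le hLP
  have hcard : p ∣ Nat.card L := by
    obtain ⟨k, hk⟩ := IsPGroup.iff_card.1 hLp
    rw [hk]
    refine dvd_pow_self p ?_
    rintro rfl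
    rw [pow_zero, card_eq_one] at hk
    exact hne hk
  obtain ⟨b, hb, hne'⟩ := hP.exists_fixed_point_of_prime_dvd_card_of_fixed_point L hcard
    (a := 1) (by
      intro x; apply Subtype.ext; rw [hsm]; simp)
  intro h
  apply hne'
  have : (b : G) ∈ L ⊓ centralizer (P : Set G) := by
    refine ⟨b.2, ?_⟩
    refine mem_centralizer_iff.2 ?_
    intro x hx
    have := congrArg Subtype.val (hb ⟨x, hx⟩)
    rw [hsm] at this
    simpa [mul_inv_eq_iff_eq_mul] using this
  rw [h, mem_bot] at this
  exact Subtype.ext this.symm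

theorem ss_exists_cyclic_in {G : Type*} [Group G] {T A : Subgroup G} (hT : IsSupersoluble T)
    (hA : A.Normal) (hAT : A ≤ T) (hne : A ≠ ⊥) :
    ∃ c ∈ A, c ≠ 1 ∧ ∀ t ∈ T, t * c * t⁻¹ ∈ zpowers c := by
  obtain ⟨c, hc, hc1, hcn⟩ := ss_exists_cyclic hT (hA.subgroupOf T) (by
    rw [Ne, subgroupOf_eq_bot, disjoint_iff, inf_eq_left.2 hAT]; exact hne)
  refine ⟨c, hc, by simpa using hc1, fun t ht => ?_⟩
  obtain ⟨k, hk⟩ := hcn.conj_mem c (mem_zpowers c) ⟨t, ht⟩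
  exact ⟨k, by simpa using congrArg Subtype.val hk⟩

theorem zpowers_normal_of {G : Type*} [Group G] {c : G} {A B : Subgroup G} (hAB : A ⊔ B = ⊤)
    (hA : ∀ t ∈ A, t * c * t⁻¹ ∈ zpowers c) (hB : ∀ t ∈ B, t * c * t⁻¹ ∈ zpowers c) :
    (zpowers c).Normal := by
  have key : ∀ A : Subgroup G, (∀ t ∈ A, t * c * t⁻¹ ∈ zpowers c) →
      A ≤ normalizer (zpowers c : Set G) := by
    intro A hA t ht
    have h1 : ∀ t ∈ A, ∀ x ∈ zpowers c, t * x * t⁻¹ ∈ zpowers c := by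
      rintro t ht _ ⟨k, rfl⟩
      simp only
      rw [← conj_zpow]; exact zpow_mem (hA t ht) k
    rw [mem_normalizer_iff]
    refine fun x => ⟨h1 t ht x, fun hx => ?_⟩
    have := h1 t⁻¹ (A.inv_mem ht) _ hx
    simpa [mul_assoc] using this
  rw [← normalizer_eq_top_iff, eq_top_iff, ← hAB]
  exact sup_le (key A hA) (key B hB)

theorem chain_key (n : ℕ) : ∀ (G : Type u) [Group G] [Finite G], Nat.card G ≤ n →
    ∀ (p : ℕ) (_ : p.Prime) (P L T : Subgroup G), P.Normal → IsPGroup p P → L.Normal → L ≤ P →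
      IsSupersoluble T → L ≤ T → P ⊔ T = ⊤ → Relation.ReflTransGen (SStep (G := G)) ⊥ L := by
  induction n with
  | zero => intro G _ _ h; exact absurd (Nat.card_pos (α := G)) (by omega)
  | succ n ih =>
    intro G _ _ hcard p hp P L T hP hPp hL hLP hT hLT hPT
    by_cases hne : L = ⊥
    · rw [hne]
    have hAne := pgroup_inf_centralizer hp hPp hL hLP hne
    have hCn : (centralizer (P : Set G)).Normal := inferInstance
    obtain ⟨c, hc, hc1, hcT⟩ := ss_exists_cyclic_in hT (A := L ⊓ centralizer (P : Set G))
      (normal_inf_normal _ _) (inf_le_left.trans hLT) hAne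
    have hcn : (zpowers c).Normal := by
      refine zpowers_normal_of hPT (fun t ht => ?_) hcT
      have h1 := mem_centralizer_iff.1 hc.2 t ht
      rw [h1]; simp
    have hs := QuotientGroup.mk'_surjective (zpowers c)
    have hcL : zpowers c ≤ L := by simpa using hc.1
    have hlt : Nat.card (G ⧸ zpowers c) ≤ n := by
      have h1 := (zpowers c).card_mul_index
      rw [index_eq_card] at h1
      have h2 : 1 < Nat.card (zpowers c) := by
        rw [one_lt_card_iff_ne_bot]; simpa using hc1
      have h3 : 0 < Nat.card (G ⧸ zpowers c) := Nat.card_pos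
      nlinarith
    have hch := ih (G ⧸ zpowers c) hlt p hp (P.map (QuotientGroup.mk' _)) (L.map (QuotientGroup.mk' _))
      (T.map (QuotientGroup.mk' _)) (hP.map _ hs) (hPp.map _) (hL.map _ hs) (map_mono hLP)
      (ss_map ((QuotientGroup.mk' (zpowers c)).subgroupMap T)
        (MonoidHom.subgroupMap_surjective _ _) hT) (map_mono hLT)
      (by rw [← Subgroup.map_sup, hPT, map_top_of_surjective _ hs])
    have h2 : Relation.ReflTransGen (SStep (G := G)) (comap (QuotientGroup.mk' (zpowers c)) ⊥)
       (comap (QuotientGroup.mk' (zpowers c)) (L.map (QuotientGroup.mk' (zpowers c)))) := 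
      hch.lift (Subgroup.comap (QuotientGroup.mk' _)) (fun _ _ h => SStep.comap h)
    rw [comap_map_eq_self (by rw [QuotientGroup.ker_mk']; exact hcL)] at h2
    have h3 : comap (QuotientGroup.mk' (zpowers c)) ⊥ = zpowers c := by
      rw [MonoidHom.comap_bot, QuotientGroup.ker_mk']
    rw [h3] at h2
    exact h2.head ⟨inferInstance, hcn, c, by simp⟩

theorem sylow_coprime {G : Type*} [Group G] [Finite G] {p : ℕ} (hp : p.Prime) {P : Subgroup G}
    (hP : IsSylowSubgroup p P) : (Nat.card P).Coprime P.index := by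
  have : Fact p.Prime := ⟨hp⟩
  obtain ⟨k, hk⟩ := IsPGroup.iff_card.1 hP.1
  rw [hk]; exact Nat.Coprime.pow_left _ (hp.coprime_iff_not_dvd.2 hP.2)

theorem sup_compl_ne_top {G : Type*} [Group G] [Finite G] {P H L : Subgroup G} (h : IsComplement' P H)
    (hL : L.Normal) (hLP : L ≤ P) (hne : L ≠ P) : L ⊔ H ≠ ⊤ := by
  intro e
  apply hne
  refine le_antisymm hLP fun x hx => ?_
  have hx' : x ∈ L ⊔ H := by rw [e]; trivial
  rw [← SetLike.mem_coe, normal_mul] at hx'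
  obtain ⟨a, ha, b, hb, rfl⟩ := hx'
  have hbP : b ∈ P := by
    have := P.mul_mem (P.inv_mem (hLP ha)) hx
    simpa using this
  have : b ∈ P ⊓ H := ⟨hbP, hb⟩
  rw [h.disjoint.eq_bot, mem_bot] at this
  simpa [this] using ha

theorem stepB_le {G : Type u} [Group G] [Finite G] (hG : IsMinimalNonsupersoluble G) {p : ℕ} (hp : p.Prime)
    {P : Subgroup G} (hPS : IsSylowSubgroup p P) (hP : P.Normal) (hne : P ≠ ⊥) {L : Subgroup G}
    (hL : L.Normal) (hLP : L ≤ P) (hLne : L ≠ P) : L ≤ frattiniIn P := by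
  by_contra hcon
  obtain ⟨M, hM, hMP, hMne, hLM⟩ := maschke_frattini hp hP hPS.1 hPS.2 hL hLP hcon
  obtain ⟨H, hH⟩ := exists_right_complement'_of_coprime (N := P) (sylow_coprime hp hPS)
  have hHs := hG.2 H (compl_ne_top hH hne)
  have hq := ss_quot_of_compl hH.sup_eq_top hHs
  have ch : ∀ L : Subgroup G, L.Normal → L ≤ P → L ≠ P → Relation.ReflTransGen (SStep (G := G)) ⊥ L := by
    intro L hL hLP hLne
    refine chain_key (Nat.card G) G le_rfl p hp P L (L ⊔ H) hP hPS.1 hL hLP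
      (hG.2 _ (sup_compl_ne_top hH hL hLP hLne)) le_sup_left ?_
    rw [eq_top_iff, ← hH.sup_eq_top]
    exact sup_le_sup_left le_sup_right _
  have h1 := ch L hL hLP hLne
  have h2 : Relation.ReflTransGen (SStep (G := G)) (L ⊔ ⊥) (L ⊔ M) :=
    (ch M hM hMP hMne).lift (fun X => L ⊔ X) (fun _ _ h => SStep.sup h hL)
  rw [sup_bot_eq, hLM] at h2
  exact hG.1 (ss_of_chain hq (h1.trans h2))

theorem chief_of {G : Type*} [Group G] {A B : Subgroup G} (hA : A.Normal) (hB : B.Normal)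
    (hBA : B ≤ A) (hne : B ≠ A) (h : ∀ X : Subgroup G, X.Normal → B ≤ X → X ≤ A → X = B ∨ X = A) :
    IsChiefFactor A B := by
  have hs := QuotientGroup.mk'_surjective B
  refine ⟨hA, hBA, hB, hA.map _ hs, ?_, ?_⟩
  · intro e
    rw [Subgroup.map_eq_bot_iff, QuotientGroup.ker_mk'] at e
    exact hne (le_antisymm hBA e)
  · intro M hM hMA hMne
    have h1 : B ≤ M.comap (QuotientGroup.mk' B) := by
      have := MonoidHom.ker_le_comap (QuotientGroup.mk' B) M
      rwa [QuotientGroup.ker_mk'] at this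
    have h2 : M.comap (QuotientGroup.mk' B) ≤ A := by
      have := Subgroup.comap_mono (f := QuotientGroup.mk' B) hMA
      rwa [comap_map_eq_self (by rw [QuotientGroup.ker_mk']; exact hBA)] at this
    have h3 := map_comap_eq_self_of_surjective hs M
    rcases h _ (hM.comap _) h1 h2 with e | e
    · exfalso; apply hMne
      rw [← h3, e, QuotientGroup.map_mk'_self]
    · rw [← h3, e]

theorem frattiniIn_ne {G : Type*} [Group G] [Finite G] {P : Subgroup G} (hne : P ≠ ⊥) :
    frattiniIn P ≠ P := by
  intro h
  apply hne
  exact (frattiniIn_nongen (H := ⊥) bot_le (by rw [bot_sup_eq, h])).symm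

theorem stepB {G : Type u} [Group G] [Finite G] (hG : IsMinimalNonsupersoluble G) {p : ℕ} (hp : p.Prime)
    {P : Subgroup G} (hPS : IsSylowSubgroup p P) (hP : P.Normal) (hne : P ≠ ⊥) :
    IsChiefFactor P (frattiniIn P) := by
  refine chief_of hP (frattiniIn_normal hP) (frattiniIn_le P) (frattiniIn_ne hne) ?_
  intro X hX h1 h2
  by_cases h : X = P
  · exact Or.inr h
  · exact Or.inl (le_antisymm (stepB_le hG hp hPS hP hne hX h2 h) h1)


theorem normal_of_gen {G : Type*} [Group G] {H A B : Subgroup G} (hAB : A ⊔ B = ⊤)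
    (hA : ∀ t ∈ A, ∀ x ∈ H, t * x * t⁻¹ ∈ H) (hB : ∀ t ∈ B, ∀ x ∈ H, t * x * t⁻¹ ∈ H) :
    H.Normal := by
  have key : ∀ A : Subgroup G, (∀ t ∈ A, ∀ x ∈ H, t * x * t⁻¹ ∈ H) →
      A ≤ normalizer (H : Set G) := by
    intro A hA t ht
    rw [mem_normalizer_iff]
    refine fun x => ⟨hA t ht x, fun hx => ?_⟩
    have := hA t⁻¹ (A.inv_mem ht) _ hx
    simpa [mul_assoc] using this
  rw [← normalizer_eq_top_iff, eq_top_iff, ← hAB]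
  exact sup_le (key A hA) (key B hB)

theorem cyclic_comm {G : Type*} [Group G] {b : G} (hb : (zpowers b).Normal) (x y : G) :
    (x * y * x⁻¹ * y⁻¹) * b = b * (x * y * x⁻¹ * y⁻¹) := by
  have hx : ∃ i : ℤ, b ^ i = x⁻¹ * b * x := by
    obtain ⟨i, hi⟩ := hb.conj_mem b (mem_zpowers b) x⁻¹
    exact ⟨i, by simpa using hi⟩
  have hy : ∃ i : ℤ, b ^ i = y⁻¹ * b * y := by
    obtain ⟨i, hi⟩ := hb.conj_mem b (mem_zpowers b) y⁻¹
    exact ⟨i, by simpa using hi⟩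
  obtain ⟨i, hi⟩ := hx
  obtain ⟨j, hj⟩ := hy
  have e1 : b * x = x * b ^ i := by rw [hi]; group
  have e2 : b * y = y * b ^ j := by rw [hj]; group
  have e1' : ∀ k : ℤ, b ^ k * x = x * b ^ (i * k) := fun k => by
    have : x⁻¹ * b ^ k * x = b ^ (i * k) := by
      have := conj_zpow (i := k) (a := x⁻¹) (b := b)
      rw [inv_inv] at this
      rw [← this, ← hi, zpow_mul]
    rw [← this]; group
  have e2' : ∀ k : ℤ, b ^ k * y = y * b ^ (j * k) := fun k => by
    have : y⁻¹ * b ^ k * y = b ^ (j * k) := by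
      have := conj_zpow (i := k) (a := y⁻¹) (b := b)
      rw [inv_inv] at this
      rw [← this, ← hj, zpow_mul]
    rw [← this]; group
  have h3 : b * (x * y) = (x * y) * b ^ (j * i) := by
    rw [← mul_assoc, e1, mul_assoc, e2', mul_assoc]
  have h4 : b * (y * x) = (y * x) * b ^ (j * i) := by
    rw [← mul_assoc, e2, mul_assoc, e1', mul_assoc, mul_comm i j]
  have h5 : b ^ (j * i) = (y * x)⁻¹ * b * (y * x) := by
    rw [mul_assoc, h4]; group
  rw [h5] at h3
  calc x * y * x⁻¹ * y⁻¹ * b = (x * y * ((y * x)⁻¹ * b * (y * x))) * (y * x)⁻¹ := by group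
    _ = b * (x * y) * (y * x)⁻¹ := by rw [← h3]
    _ = _ := by group

theorem alpha {K : Type*} [Group K] [Finite K] (h : IsSupersoluble K) {V : Subgroup K} (hV : V.Normal)
    (hc : ∀ x ∈ V, ∀ y ∈ V, x * y = y * x) (hco : (Nat.card V).Coprime V.index) (x y : K) :
    ∀ v ∈ V, (x * y * x⁻¹ * y⁻¹) * v = v * (x * y * x⁻¹ * y⁻¹) := by
  rw [ss_iff] at h
  set g := x * y * x⁻¹ * y⁻¹ with hg
  have key : ∀ X : Subgroup K, Relation.ReflTransGen (SStep (G := K)) ⊥ X →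
      ∀ v ∈ X ⊓ V, g * v = v * g := by
    intro X hX
    induction hX with
    | refl => 
      intro v hv
      rw [bot_inf_eq, mem_bot] at hv
      simp [hv]
    | tail hab hbc ih =>
      rename_i Y Z
      obtain ⟨hA, hB, b, hb⟩ := hbc.inf hV
      set A := Y ⊓ V with hAdef
      intro v hv
      have hbn : (zpowers (QuotientGroup.mk' A b)).Normal := by
        rw [← MonoidHom.map_zpowers]
        have : (zpowers b).map (QuotientGroup.mk' A) = (Z ⊓ V).map (QuotientGroup.mk' A) := by
          rw [hb, Subgroup.map_sup, QuotientGroup.map_mk'_self, bot_sup_eq]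
        rw [this]
        exact hB.map _ (QuotientGroup.mk'_surjective A)
      have h1 := cyclic_comm hbn (QuotientGroup.mk' A x) (QuotientGroup.mk' A y)
      rw [← map_inv, ← map_inv, ← map_mul, ← map_mul, ← map_mul, ← hg] at h1
      have hv' := hv
      rw [hb] at hv'
      obtain ⟨a0, ha0, k, hvk⟩ := mem_sup_zpowers hA hv'
      have hva : QuotientGroup.mk' A v = (QuotientGroup.mk' A b) ^ k := by
        have : QuotientGroup.mk' A a0 = 1 := (QuotientGroup.eq_one_iff a0).2 ha0
        rw [hvk, map_mul, this, one_mul, map_zpow]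
      have h2 : Commute (QuotientGroup.mk' A g) (QuotientGroup.mk' A v) := by
        rw [hva]
        exact Commute.zpow_right h1 k
      have h3 : g * v * g⁻¹ * v⁻¹ ∈ A := by
        apply (QuotientGroup.eq_one_iff _).1
        change QuotientGroup.mk' A (g * v * g⁻¹ * v⁻¹) = 1
        rw [map_mul, map_mul, map_mul, h2.eq, map_inv, map_inv]; group
      set a := g * v * g⁻¹ * v⁻¹ with ha
      have ha1 : Commute g a := ih a h3
      have h4 : ∀ n : ℕ, g ^ n * v * (g ^ n)⁻¹ = a ^ n * v := by
        intro n
        induction n with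
        | zero => simp
        | succ n ihn =>
          have : g ^ (n + 1) * v * (g ^ (n + 1))⁻¹ = g * (g ^ n * v * (g ^ n)⁻¹) * g⁻¹ := by
            rw [pow_succ']; group
          have h8 : g * v * g⁻¹ = a * v := by rw [ha, inv_mul_cancel_right]
          calc _ = (g * a ^ n) * v * g⁻¹ := by rw [this, ihn, ← mul_assoc]
            _ = a ^ n * (g * v * g⁻¹) := by
              rw [(ha1.pow_right n).eq]; simp only [mul_assoc]
            _ = a ^ (n + 1) * v := by rw [h8, pow_succ, ← mul_assoc]
      have h5 := h4 V.index
      have h6 : g ^ V.index ∈ V := V.pow_index_mem g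
      rw [hc _ h6 v hv.2] at h5
      have h7 : a ^ V.index = 1 := by
        have : v * g ^ V.index * (g ^ V.index)⁻¹ = v := by group
        rw [this] at h5
        exact (right_eq_mul.1 h5)
      have h8 : a = 1 := by
        have d1 := orderOf_dvd_of_pow_eq_one h7
        have d2 : orderOf a ∣ Nat.card V := V.orderOf_dvd_natCard h3.2
        have := Nat.eq_one_of_dvd_coprimes hco d2 d1
        exact orderOf_eq_one_iff.1 this
      have h9 : g * v = a * (v * g) := by rw [ha]; group
      rw [h9, h8, one_mul]
  intro v hv
  exact key ⊤ h v ⟨trivial, hv⟩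

theorem alpha_sub {G : Type*} [Group G] [Finite G] {K V : Subgroup G} (h : IsSupersoluble K)
    (hV : V.Normal) (hVK : V ≤ K)
    (hc : ∀ x ∈ V, ∀ y ∈ V, x * y = y * x) (hco : (Nat.card V).Coprime V.index) {x y : G}
    (hx : x ∈ K) (hy : y ∈ K) :
    ∀ v ∈ V, (x * y * x⁻¹ * y⁻¹) * v = v * (x * y * x⁻¹ * y⁻¹) := by
  intro v hv
  have := alpha h (V := V.subgroupOf K) (hV.subgroupOf K)
    (fun a ha b hb => Subtype.ext (hc a ha b hb))
    (by
      rw [Nat.card_congr (subgroupOfEquivOfLe hVK).toEquiv]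
      exact Nat.Coprime.coprime_dvd_right (relIndex_dvd_index_of_normal V K) hco)
    ⟨x, hx⟩ ⟨y, hy⟩ ⟨v, hVK hv⟩ hv
  exact congrArg Subtype.val this

theorem beta {G : Type*} [Group G] {V Q R : Subgroup G} [hV : V.Normal]
    (hc : ∀ x ∈ V, ∀ y ∈ V, x * y = y * x) (hne : V ≠ ⊥)
    (hmin : ∀ L : Subgroup G, L.Normal → L ≤ V → L ≠ ⊥ → L = V)
    (hgen : V ⊔ Q ⊔ R = ⊤) (hQ : IsSupersoluble ↥(V ⊔ Q)) (hR : IsSupersoluble ↥(V ⊔ R))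
    (hq : IsSupersoluble (G ⧸ V))
    (hcent : ∀ x ∈ Q, ∀ y ∈ R, ∀ v ∈ V, (x * y * x⁻¹ * y⁻¹) * v = v * (x * y * x⁻¹ * y⁻¹)) :
    IsSupersoluble G := by
  obtain ⟨c, hcV, hc1, hcn⟩ := ss_exists_cyclic_in hQ hV le_sup_left hne
  have : ∀ x : G, ∃ n : ℤ, x ∈ Q → x * c * x⁻¹ = c ^ n := by
    intro x
    by_cases hx : x ∈ Q
    · obtain ⟨n, hn⟩ := hcn x (mem_sup_right hx)
      exact ⟨n, fun _ => hn.symm⟩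
    · exact ⟨0, fun h => absurd h hx⟩
  choose n hn using this
  let W : Subgroup G :=
    { carrier := {w | w ∈ V ∧ ∀ x ∈ Q, x * w * x⁻¹ = w ^ n x}
      mul_mem' := by
        rintro a b ⟨ha, ha'⟩ ⟨hb, hb'⟩
        refine ⟨V.mul_mem ha hb, fun x hx => ?_⟩
        rw [(show Commute a b from hc a ha b hb).mul_zpow, ← ha' x hx, ← hb' x hx]
        group
      one_mem' := ⟨V.one_mem, by simp⟩
      inv_mem' := by
        rintro a ⟨ha, ha'⟩
        refine ⟨V.inv_mem ha, fun x hx => ?_⟩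
        rw [inv_zpow, ← ha' x hx]
        group }
  have hWV : W ≤ V := fun x hx => hx.1
  have hWn : W.Normal := by
    have hWn1 : ∀ t ∈ normalizer (W : Set G), ∀ x ∈ W, t * x * t⁻¹ ∈ W :=
      fun t ht x hx => (mem_normalizer_iff.1 ht x).1 hx
    have key : ∀ A : Subgroup G, (∀ t ∈ A, ∀ x ∈ W, t * x * t⁻¹ ∈ W) →
        A ≤ normalizer (W : Set G) := by
      intro A hA t ht
      rw [mem_normalizer_iff]
      refine fun x => ⟨hA t ht x, fun hx => ?_⟩
      have := hA t⁻¹ (A.inv_mem ht) _ hx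
      simpa [mul_assoc] using this
    refine normal_of_gen hgen (fun t ht => hWn1 t ?_) ?_
    · revert t
      change V ⊔ Q ≤ _
      refine sup_le (key V ?_) (key Q ?_)
      · intro t ht x hx
        rw [hc t ht x hx.1]; simpa using hx
      · intro t ht x hx
        rw [hx.2 t ht]; exact W.zpow_mem hx _
    · intro y hy w hw
      refine ⟨hV.conj_mem w hw.1 y, fun x hx => ?_⟩
      have h1 := hcent x hx y hy ((y * w * y⁻¹) ^ n x) (V.zpow_mem (hV.conj_mem w hw.1 y) _)
      calc x * (y * w * y⁻¹) * x⁻¹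
          = (x * y * x⁻¹ * y⁻¹) * (y * (x * w * x⁻¹) * y⁻¹) * (x * y * x⁻¹ * y⁻¹)⁻¹ := by group
        _ = (x * y * x⁻¹ * y⁻¹) * (y * w * y⁻¹) ^ n x * (x * y * x⁻¹ * y⁻¹)⁻¹ := by
            rw [hw.2 x hx, conj_zpow]
        _ = _ := by rw [h1]; group
  have hcW : c ∈ W := ⟨hcV, fun x hx => hn x hx⟩
  have hWeq : W = V := hmin W hWn hWV (by
    intro h; rw [h, mem_bot] at hcW; exact hc1 hcW)
  obtain ⟨d, hdV, hd1, hdn⟩ := ss_exists_cyclic_in hR hV le_sup_left hne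
  have hdQ : ∀ t ∈ Q, t * d * t⁻¹ ∈ zpowers d := by
    intro t ht
    have hdW : d ∈ W := by rw [hWeq]; exact hdV
    rw [hdW.2 t ht]; exact zpow_mem (mem_zpowers d) _
  have hN : (zpowers d).Normal := by
    refine zpowers_normal_of (A := V ⊔ R) (B := Q) ?_ hdn hdQ
    rw [sup_right_comm]; exact hgen
  have hVd : zpowers d = V := hmin _ hN (by simpa using hdV) (by simpa using hd1)
  refine ss_of_chain hq (Relation.ReflTransGen.single ⟨inferInstance, hV, d, ?_⟩)
  rw [bot_sup_eq, hVd]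

theorem sup_ne_top_of_inf {G : Type*} [Group G] {P H L : Subgroup G} (h : P ⊓ H = ⊥)
    (hL : L.Normal) (hLP : L ≤ P) (hne : L ≠ P) : L ⊔ H ≠ ⊤ := by
  intro e
  apply hne
  refine le_antisymm hLP fun x hx => ?_
  have hx' : x ∈ L ⊔ H := by rw [e]; trivial
  rw [← SetLike.mem_coe, normal_mul] at hx'
  obtain ⟨a, ha, b, hb, rfl⟩ := hx'
  have hbP : b ∈ P := by
    have := P.mul_mem (P.inv_mem (hLP ha)) hx
    simpa using this
  have : b ∈ P ⊓ H := ⟨hbP, hb⟩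
  rw [h, mem_bot] at this
  simpa [this] using ha

theorem R_cyclic {G : Type*} [Group G] [Finite G] (hG : IsMinimalNonsupersoluble G)
    {V Q R : Subgroup G} [hV : V.Normal]
    (hc : ∀ x ∈ V, ∀ y ∈ V, x * y = y * x) (hne : V ≠ ⊥)
    (hco : (Nat.card V).Coprime V.index)
    (hmin : ∀ L : Subgroup G, L.Normal → L ≤ V → L ≠ ⊥ → L = V)
    (hgen : V ⊔ Q ⊔ R = ⊤) (hQ : V ⊔ Q ≠ ⊤) (hR : V ⊔ R ≠ ⊤)
    (hq : IsSupersoluble (G ⧸ V)) (hK : (V ⊔ Q).Normal) (hKR : (V ⊔ Q) ⊓ R = ⊥) : IsCyclic R := by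
  by_contra hcyc
  refine hG.1 (beta hc hne hmin hgen (hG.2 _ hQ) (hG.2 _ hR) hq ?_)
  intro x hx y hy
  have hK' : V ⊔ Q ⊔ zpowers y ≠ ⊤ := by
    intro e
    apply hcyc
    rw [Subgroup.isCyclic_iff_exists_zpowers_eq_top]
    refine ⟨y, le_antisymm (by simpa using hy) ?_⟩
    intro z hz
    have hz' : z ∈ V ⊔ Q ⊔ zpowers y := by rw [e]; trivial
    obtain ⟨k, hk, j, rfl⟩ := mem_sup_zpowers hK hz'
    have : k ∈ (V ⊔ Q) ⊓ R := by
      refine ⟨hk, ?_⟩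
      have := R.mul_mem hz (R.inv_mem (R.zpow_mem hy j))
      simpa using this
    rw [hKR, mem_bot] at this
    rw [this, one_mul]; exact ⟨j, rfl⟩
  exact alpha_sub (hG.2 _ hK') hV (le_sup_left.trans le_sup_left) hc hco
    (mem_sup_left (mem_sup_right hx)) (mem_sup_right (mem_zpowers y))

theorem cyclic_of_map {G : Type*} [Group G] {N Q : Subgroup G} [N.Normal] (h : N ⊓ Q = ⊥)
    (hc : IsCyclic (Q.map (QuotientGroup.mk' N))) : IsCyclic Q := by
  refine isCyclic_of_injective ((QuotientGroup.mk' N).subgroupMap Q) ?_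
  rw [injective_iff_map_eq_one]
  intro a ha
  have h1 : QuotientGroup.mk' N (a : G) = 1 := congrArg Subtype.val ha
  have h2 : (a : G) ∈ N ⊓ Q := ⟨(QuotientGroup.eq_one_iff _).1 h1, a.2⟩
  rw [h, mem_bot] at h2
  exact Subtype.ext h2

theorem Q_cyclic {G : Type*} [Group G] [Finite G] (hG : IsMinimalNonsupersoluble G)
    {q : ℕ} (hqp : q.Prime)
    {V Q R : Subgroup G} [hV : V.Normal]
    (hc : ∀ x ∈ V, ∀ y ∈ V, x * y = y * x) (hne : V ≠ ⊥)
    (hco : (Nat.card V).Coprime V.index)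
    (hmin : ∀ L : Subgroup G, L.Normal → L ≤ V → L ≠ ⊥ → L = V)
    (hgen : V ⊔ Q ⊔ R = ⊤) (hQ : V ⊔ Q ≠ ⊤) (hR : V ⊔ R ≠ ⊤)
    (hq : IsSupersoluble (G ⧸ V)) (hK : (V ⊔ Q).Normal) (hKR : (V ⊔ Q) ⊓ R = ⊥)
    (hQp : IsPGroup q Q) (hi : ¬ q ∣ (V ⊔ Q).index) (hVQ : V ⊓ Q = ⊥) : IsCyclic Q := by
  by_contra hcyc
  have hs := QuotientGroup.mk'_surjective V
  have hVker : (QuotientGroup.mk' V).ker = V := QuotientGroup.ker_mk' V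
  have hQb : Q.map (QuotientGroup.mk' V) = (V ⊔ Q).map (QuotientGroup.mk' V) := by
    rw [Subgroup.map_sup, QuotientGroup.map_mk'_self, bot_sup_eq]
  have hQbn : (Q.map (QuotientGroup.mk' V)).Normal := by rw [hQb]; exact hK.map _ hs
  have hQbi : ¬ q ∣ (Q.map (QuotientGroup.mk' V)).index := by
    rw [hQb, index_map_eq _ hs (by rw [hVker]; exact le_sup_left)]; exact hi
  have hQb1 : Q.map (QuotientGroup.mk' V) ≠ ⊥ := by
    intro h
    apply hcyc
    apply cyclic_of_map hVQ
    rw [h]; infer_instance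
  have hQR : Q.map (QuotientGroup.mk' V) ⊓ R.map (QuotientGroup.mk' V) = ⊥ := by
    rw [eq_bot_iff, hQb]
    rintro _ ⟨⟨x, hx, rfl⟩, y, hy, e⟩
    have h1 : y ∈ V ⊔ Q := by
      obtain ⟨z, hz, e⟩ := (QuotientGroup.mk'_eq_mk' V).1 e.symm
      rw [← e]; exact mul_mem hx (mem_sup_left hz)
    have h2 : y ∈ (V ⊔ Q) ⊓ R := ⟨h1, hy⟩
    rw [hKR, mem_bot] at h2
    rw [mem_bot, ← e, h2, map_one]
  obtain ⟨L, hL, hLQ, c, hLc⟩ := ss_exists_max hq hQbn hQb1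
  by_cases hLF : L ≤ frattiniIn (Q.map (QuotientGroup.mk' V))
  · apply hcyc
    apply cyclic_of_map hVQ
    rw [Subgroup.isCyclic_iff_exists_zpowers_eq_top]
    refine ⟨c, frattiniIn_nongen ?_ ?_⟩
    · rw [hLc]; exact le_sup_right
    · conv_lhs => rw [hLc]
      exact sup_le (hLF.trans le_sup_right) le_sup_left
  obtain ⟨M, hM, hMQ, hMne, hLM⟩ := maschke_frattini hqp hQbn (hQp.map _) hQbi hL hLQ.le hLF
  let C := centralizer (V : Set G)
  let S := (centralizer ((R.map (QuotientGroup.mk' C) : Subgroup (G ⧸ C)) : Set (G ⧸ C))).comap (QuotientGroup.mk' C)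
  have hS : ∀ x, x ∈ S ↔ ∀ y ∈ R, x * y * x⁻¹ * y⁻¹ ∈ C := by
    intro x
    have : x ∈ S ↔ QuotientGroup.mk' C x ∈ centralizer ((R.map (QuotientGroup.mk' C) : Subgroup (G ⧸ C)) : Set (G ⧸ C)) := Iff.rfl
    rw [this, mem_centralizer_iff_commutator_eq_one']
    have h2 : ∀ y, (QuotientGroup.mk' C x * QuotientGroup.mk' C y * (QuotientGroup.mk' C x)⁻¹ * (QuotientGroup.mk' C y)⁻¹ = 1) ↔ x * y * x⁻¹ * y⁻¹ ∈ C := by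
      intro y
      rw [← map_inv, ← map_inv, ← map_mul, ← map_mul, ← map_mul]
      exact QuotientGroup.eq_one_iff _
    constructor
    · intro h y hy
      exact (h2 y).1 (h _ ⟨y, hy, rfl⟩)
    · rintro h _ ⟨y, hy, rfl⟩
      exact (h2 y).2 (h y hy)
  have key : ∀ L : Subgroup (G ⧸ V), L.Normal → L ≤ Q.map (QuotientGroup.mk' V) →
      L ≠ Q.map (QuotientGroup.mk' V) → L.comap (QuotientGroup.mk' V) ≤ S := by
    intro L hL hLQ hLne x hx
    rw [hS]
    intro y hy
    have h1 := sup_ne_top_of_inf hQR hL hLQ hLne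
    have h2 : (L ⊔ R.map (QuotientGroup.mk' V)).comap (QuotientGroup.mk' V) ≠ ⊤ := by
      intro e
      apply h1
      rw [← map_comap_eq_self_of_surjective hs (L ⊔ R.map (QuotientGroup.mk' V)), e,
        map_top_of_surjective _ hs]
    have h3 := alpha_sub (hG.2 _ h2) hV (by
      have := MonoidHom.ker_le_comap (QuotientGroup.mk' V) (L ⊔ R.map (QuotientGroup.mk' V))
      rwa [hVker] at this) hc hco (x := x) (y := y)
      (Subgroup.comap_mono le_sup_left hx)
      (Subgroup.comap_mono le_sup_right (le_comap_map _ _ hy))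
    rw [mem_centralizer_iff]
    intro v hv
    exact (h3 v hv).symm
  have hQS : Q ≤ S := by
    refine (le_comap_map (QuotientGroup.mk' V) Q).trans ?_
    rw [← hLM, ← comap_sup_eq _ _ _ hs]
    exact sup_le (key L hL hLQ.le hLQ.ne) (key M hM hMQ hMne)
  refine hG.1 (beta hc hne hmin hgen (hG.2 _ hQ) (hG.2 _ hR) hq ?_)
  intro x hx y hy v hv
  exact (mem_centralizer_iff.1 ((hS x).1 (hQS hx) y hy) v hv).symm


theorem modular_aux {G : Type*} [Group G] {N X H : Subgroup G} (hN : N.Normal) (h : N ≤ X) :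
    X ⊓ (N ⊔ H) = N ⊔ (X ⊓ H) := by
  apply le_antisymm
  · rintro x ⟨hx, hx'⟩
    replace hx' : x ∈ ((N ⊔ H : Subgroup G) : Set G) := hx'
    rw [normal_mul] at hx'
    obtain ⟨a, ha, b, hb, rfl⟩ := hx'
    refine mul_mem (mem_sup_left ha) (mem_sup_right ⟨?_, hb⟩)
    have := X.mul_mem (X.inv_mem (h ha)) hx
    simpa using this
  · exact le_inf (sup_le h inf_le_left) (sup_le_sup_left inf_le_right _)

theorem map_inf_bot {G : Type*} [Group G] {N K R : Subgroup G} [N.Normal] (h : N ≤ K)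
    (hKR : K ⊓ R = ⊥) : K.map (QuotientGroup.mk' N) ⊓ R.map (QuotientGroup.mk' N) = ⊥ := by
  rw [eq_bot_iff]
  rintro _ ⟨⟨x, hx, rfl⟩, y, hy, e⟩
  have h1 : y ∈ K := by
    obtain ⟨z, hz, e⟩ := (QuotientGroup.mk'_eq_mk' N).1 e.symm
    rw [← e]; exact mul_mem hx (h hz)
  have h2 : y ∈ K ⊓ R := ⟨h1, hy⟩
  rw [hKR, mem_bot] at h2
  rw [mem_bot, ← e, h2, map_one]

theorem map_ne_top {G : Type*} [Group G] {N K : Subgroup G} [N.Normal] (h : N ≤ K) (hK : K ≠ ⊤) :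
    K.map (QuotientGroup.mk' N) ≠ ⊤ := by
  intro e
  apply hK
  rw [← comap_map_eq_self (f := QuotientGroup.mk' N) (H := K) (by rw [QuotientGroup.ker_mk']; exact h), e,
    comap_top]

theorem stepC {G : Type u} [Group G] [Finite G] (hG : IsMinimalNonsupersoluble G) {p q : ℕ}
    (hp : p.Prime) (hqp : q.Prime) {P Q R : Subgroup G} (hPS : IsSylowSubgroup p P) (hP : P.Normal)
    (hne : P ≠ ⊥) (hK : (P ⊔ Q).Normal) (hgen : P ⊔ Q ⊔ R = ⊤) (hPQ : P ⊓ Q = ⊥)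
    (hKR : (P ⊔ Q) ⊓ R = ⊥) (hQ1 : Q ≠ ⊥) (hR1 : R ≠ ⊥) (hQp : IsPGroup q Q)
    (hi : ¬ q ∣ (P ⊔ Q).index) : IsCyclic Q ∧ IsCyclic R := by
  obtain ⟨-, hFP, hF, hVmin⟩ := stepB hG hp hPS hP hne
  have hs := QuotientGroup.mk'_surjective (frattiniIn P)
  have hker : (QuotientGroup.mk' (frattiniIn P)).ker = frattiniIn P := QuotientGroup.ker_mk' _
  set f := QuotientGroup.mk' (frattiniIn P) with hf
  obtain ⟨hVn, hV1, hmin⟩ := hVmin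
  have hQt : P ⊔ Q ≠ ⊤ := by
    intro e; rw [e, top_inf_eq] at hKR; exact hR1 hKR
  have hRt : P ⊔ R ≠ ⊤ := by
    intro e
    have := modular_aux (H := R) hP (le_sup_left (a := P) (b := Q))
    rw [e, hKR, inf_top_eq, sup_bot_eq] at this
    have h2 : Q ≤ P := by rw [← this]; exact le_sup_right
    rw [inf_eq_right.2 h2] at hPQ
    exact hQ1 hPQ
  have hVS : IsSylowSubgroup p (P.map f) := by
    refine ⟨hPS.1.map f, ?_⟩
    rw [index_map_eq _ hs (by rw [hker]; exact hFP)]; exact hPS.2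
  have hco := sylow_coprime hp hVS
  have hc : ∀ x ∈ P.map f, ∀ y ∈ P.map f, x * y = y * x := by
    rintro _ ⟨x, hx, rfl⟩ _ ⟨y, hy, rfl⟩
    rw [← map_mul, ← map_mul, hf, QuotientGroup.mk'_eq_mk']
    refine ⟨_, comm_mem_frattiniIn hp hPS.1 (P.inv_mem hy) (P.inv_mem hx), ?_⟩
    group
  have hpr : ∀ H : Subgroup (G ⧸ frattiniIn P), H ≠ ⊤ → IsSupersoluble H :=
    fun H hH => mns_quot_proper hG.2 H hH
  obtain ⟨H, hH⟩ := exists_right_complement'_of_coprime (N := P) (sylow_coprime hp hPS)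
  have hGP := ss_quot_of_compl hH.sup_eq_top (hG.2 _ (compl_ne_top hH hne))
  obtain ⟨H', hH'⟩ := exists_right_complement'_of_coprime (N := P.map f) hco
  have hq := ss_quot_of_compl hH'.sup_eq_top (hpr _ (compl_ne_top hH' hV1))
  have hG' : IsMinimalNonsupersoluble (G ⧸ frattiniIn P) := by
    refine ⟨fun hss => ?_, hpr⟩
    obtain ⟨c, hcV, hc1, hcn⟩ := ss_exists_cyclic hss hVn hV1
    have hcV' := hmin _ hcn (by simpa using hcV) (by simpa using hc1)
    obtain ⟨c0, hc0, rfl⟩ := hcV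
    have h1 : zpowers c0 = P := by
      refine frattiniIn_nongen (by simpa using hc0) ?_
      rw [← MonoidHom.map_zpowers] at hcV'
      intro x hx
      have : f x ∈ (zpowers c0).map f := by rw [hcV']; exact mem_map_of_mem f hx
      obtain ⟨y, hy, e⟩ := this
      obtain ⟨z, hz, e⟩ := (QuotientGroup.mk'_eq_mk' _).1 e
      rw [← e]
      exact mul_mem (mem_sup_left hy) (mem_sup_right hz)
    refine hG.1 (ss_of_chain hGP (Relation.ReflTransGen.single ⟨inferInstance, hP, c0, ?_⟩))
    rw [bot_sup_eq, h1]
  have e1 : P.map f ⊔ Q.map f = (P ⊔ Q).map f := (Subgroup.map_sup _ _ _).symm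
  have e2 : P.map f ⊔ R.map f = (P ⊔ R).map f := (Subgroup.map_sup _ _ _).symm
  have e3 : P.map f ⊔ Q.map f ⊔ R.map f = ⊤ := by
    rw [← Subgroup.map_sup, ← Subgroup.map_sup, hgen, map_top_of_surjective _ hs]
  have a1 : P.map f ⊔ Q.map f ≠ ⊤ := by
    rw [e1]; exact map_ne_top (hFP.trans le_sup_left) hQt
  have a2 : P.map f ⊔ R.map f ≠ ⊤ := by
    rw [e2]; exact map_ne_top (hFP.trans le_sup_left) hRt
  have a3 : (P.map f ⊔ Q.map f).Normal := by rw [e1]; exact hK.map _ hs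
  have a4 : (P.map f ⊔ Q.map f) ⊓ R.map f = ⊥ := by
    rw [e1]; exact map_inf_bot (hFP.trans le_sup_left) hKR
  have a5 : ¬ q ∣ (P.map f ⊔ Q.map f).index := by
    rw [e1, index_map_eq _ hs (by rw [hker]; exact hFP.trans le_sup_left)]; exact hi
  have b1 := R_cyclic hG' hc hV1 hco hmin e3 a1 a2 hq a3 a4
  have b2 := Q_cyclic hG' hqp hc hV1 hco hmin e3 a1 a2 hq a3 a4 (hQp.map f) a5
    (map_inf_bot hFP hPQ)
  constructor
  · refine cyclic_of_map (N := frattiniIn P) ?_ b2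
    rw [eq_bot_iff, ← hPQ]; exact inf_le_inf_right _ hFP
  · refine cyclic_of_map (N := frattiniIn P) ?_ b1
    rw [eq_bot_iff, ← hKR]; exact inf_le_inf_right _ (hFP.trans le_sup_left)

theorem cyclic_sub {G : Type*} [Group G] [Finite G] {q : ℕ} (hq : q.Prime) {Q X : Subgroup G}
    (hQ : IsPGroup q Q) (hc : IsCyclic Q) (hX : X ≤ Q) : X = Q ∨ X ≤ frattiniIn Q := by
  by_cases h : X = Q
  · exact Or.inl h
  right
  obtain ⟨c, rfl⟩ := (Subgroup.isCyclic_iff_exists_zpowers_eq_top _).1 hc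
  intro x hx
  obtain ⟨k, hk⟩ := hX hx
  simp only at hk
  by_cases hd : (q : ℤ) ∣ k
  · obtain ⟨j, rfl⟩ := hd
    rw [mul_comm, zpow_mul, zpow_natCast] at hk
    rw [← hk]
    exact pow_mem_frattiniIn hq hQ (zpow_mem (mem_zpowers c) j)
  · exfalso
    apply h
    refine le_antisymm hX ?_
    rw [zpowers_le]
    obtain ⟨n, hn⟩ := hQ ⟨c, mem_zpowers c⟩
    have hn' : c ^ (q ^ n) = 1 := by simpa using congrArg Subtype.val hn
    have hco : IsCoprime k ((q ^ n : ℕ) : ℤ) := by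
      push_cast
      exact IsCoprime.pow_right (((Nat.prime_iff_prime_int.1 hq).coprime_iff_not_dvd.2 hd).symm)
    obtain ⟨a, b, hab⟩ := hco
    have : c = x ^ a := by
      rw [← hk, ← zpow_mul]
      calc c = c ^ (a * k + b * ((q ^ n : ℕ) : ℤ)) := by rw [hab, zpow_one]
        _ = _ := by
          rw [zpow_add, mul_comm b, zpow_mul c ((q ^ n : ℕ) : ℤ), zpow_natCast, hn', one_zpow, mul_one, mul_comm]
    rw [this]; exact zpow_mem hx a

theorem chief_cyclic {G : Type*} [Group G] [Finite G] {q : ℕ} (hq : q.Prime) {N Q : Subgroup G}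
    (hN : N.Normal) (hNQ : (N ⊔ Q).Normal) (hQ : IsPGroup q Q) (hc : IsCyclic Q) (hQ1 : Q ≠ ⊥)
    (hinf : N ⊓ Q = ⊥) : IsChiefFactor (N ⊔ Q) (N ⊔ frattiniIn Q) := by
  have hs := QuotientGroup.mk'_surjective N
  have hker : (QuotientGroup.mk' N).ker = N := QuotientGroup.ker_mk' N
  have hFQ := frattiniIn_le Q
  have hQm : (Q.map (QuotientGroup.mk' N)).Normal := by
    have : Q.map (QuotientGroup.mk' N) = (N ⊔ Q).map (QuotientGroup.mk' N) := by
      rw [Subgroup.map_sup, QuotientGroup.map_mk'_self, bot_sup_eq]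
    rw [this]; exact hNQ.map _ hs
  have hB : (N ⊔ frattiniIn Q).Normal := by
    have h1 : IsCyclic (Q.map (QuotientGroup.mk' N)) :=
      isCyclic_of_surjective _ ((QuotientGroup.mk' N).subgroupMap_surjective Q)
    have h2 := normal_of_le_cyclic hQm h1 (Subgroup.map_mono (f := QuotientGroup.mk' N) hFQ)
    have h3 := h2.comap (QuotientGroup.mk' N)
    rwa [comap_map_eq, hker, sup_comm] at h3
  refine chief_of hNQ hB (sup_le_sup_left hFQ _) ?_ ?_
  · intro e
    have h1 := modular_aux (H := N) (N := N) (X := N) hN le_rfl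
    apply frattiniIn_ne hQ1
    refine le_antisymm hFQ fun x hx => ?_
    have hx' : x ∈ ((N ⊔ frattiniIn Q : Subgroup G) : Set G) := by
      rw [e]; exact mem_sup_right hx
    rw [normal_mul] at hx'
    obtain ⟨a, ha, b, hb, rfl⟩ := hx'
    have : a ∈ N ⊓ Q := by
      refine ⟨ha, ?_⟩
      have := Q.mul_mem hx (Q.inv_mem (hFQ hb))
      simpa using this
    rw [hinf, mem_bot] at this
    simpa [this] using hb
  · intro X hX hBX hXA
    have h1 := modular_aux (H := Q) hN (le_sup_left.trans hBX)
    rw [inf_eq_left.2 hXA] at h1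
    rcases cyclic_sub hq hQ hc (inf_le_right : X ⊓ Q ≤ Q) with h | h
    · right; rw [h1, h]
    · left
      refine le_antisymm ?_ hBX
      rw [h1]; exact sup_le_sup_left h _


theorem conj_refl {G : Type*} [Group G] (A : Subgroup G) : ConjSubgroup A A :=
  ⟨1, by ext x; simp [Subgroup.mem_map]⟩

theorem mem_conj {G : Type*} [Group G] {A : Subgroup G} {g x : G} :
    x ∈ A.map (MulAut.conj g).toMonoidHom ↔ g⁻¹ * x * g ∈ A := by
  constructor
  · rintro ⟨y, hy, rfl⟩
    simpa [mul_assoc] using hy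
  · intro h
    exact ⟨_, h, by simp [mul_assoc]⟩

theorem conj_symm {G : Type*} [Group G] {A B : Subgroup G} (h : ConjSubgroup A B) :
    ConjSubgroup B A := by
  obtain ⟨g, rfl⟩ := h
  refine ⟨g⁻¹, ?_⟩
  ext x
  rw [mem_conj, mem_conj]
  simp [mul_assoc]

theorem conj_le {G : Type*} [Group G] {A B N : Subgroup G} (h : ConjSubgroup A B) (hN : N.Normal)
    (hle : N ≤ B) : N ≤ A := by
  obtain ⟨g, rfl⟩ := h
  intro x hx
  have := hle (hN.conj_mem x hx g)
  rw [mem_conj] at this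
  simpa [mul_assoc] using this

theorem conj_coatom {G : Type*} [Group G] {A B : Subgroup G} (h : ConjSubgroup A B)
    (hA : IsCoatom A) : IsCoatom B := by
  obtain ⟨g, rfl⟩ := h
  have := (OrderIso.isCoatom_iff (MulAut.conj g).mapSubgroup A).2 hA
  exact this

section
open MulAction MulOpposite
open scoped Pointwise

theorem compl_eq_stab {G : Type*} [Group G] [Finite G] {V A : Subgroup G} [V.Normal] [IsMulCommutative V]
    (hco : (Nat.card V).Coprime V.index) (hA : IsComplement' V A) :
    ∃ α : V.QuotientDiff, A = stabilizer G α := by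
  let T : V.LeftTransversal := ⟨(A : Set G), hA.symm⟩
  let α : V.QuotientDiff := Quotient.mk'' T
  refine ⟨α, ?_⟩
  have h1 : A ≤ stabilizer G α := by
    intro a ha
    rw [mem_stabilizer_iff]
    have h2 : op a⁻¹ • T = T := by
      apply Subtype.ext
      change op a⁻¹ • (A : Set G) = A
      exact op_smul_coe_set (A.inv_mem ha)
    change Quotient.mk'' (op a⁻¹ • T) = Quotient.mk'' T
    rw [h2]
  have h2 := isComplement'_stabilizer_of_coprime (α := α) hco
  apply Subgroup.eq_of_le_of_card_ge h1
  have e1 := h2.card_mul_card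
  have e2 := hA.card_mul_card
  have : 0 < Nat.card V := Nat.card_pos
  have := e1.trans e2.symm
  exact (Nat.eq_of_mul_eq_mul_left ‹_› this).le

theorem compl_conj {G : Type*} [Group G] [Finite G] {V A B : Subgroup G} (hV : V.Normal)
    (hc : ∀ x ∈ V, ∀ y ∈ V, x * y = y * x)
    (hco : (Nat.card V).Coprime V.index) (hA : IsComplement' V A) (hB : IsComplement' V B) :
    ConjSubgroup A B := by
  have : IsMulCommutative V := ⟨⟨fun x y => Subtype.ext (hc x x.2 y y.2)⟩⟩
  obtain ⟨α, hα⟩ := compl_eq_stab hco hA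
  obtain ⟨β, hβ⟩ := compl_eq_stab hco hB
  obtain ⟨h, hh⟩ := exists_smul_eq hco α β
  refine ⟨h, ?_⟩
  rw [hα, hβ, ← hh]
  exact stabilizer_smul_eq_stabilizer_map_conj (h : G) α

end

theorem coatom_inf {G : Type u} [Group G] [Finite G] (hG : IsMinimalNonsupersoluble G) {p : ℕ} (hp : p.Prime)
    {P : Subgroup G} (hPS : IsSylowSubgroup p P) (hP : P.Normal) (hne : P ≠ ⊥) {M : Subgroup G}
    (hM : IsCoatom M) (hPM : ¬ P ≤ M) : P ⊔ M = ⊤ ∧ P ⊓ M = frattiniIn P := by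
  have hF := frattiniIn_normal hP
  have hFP := frattiniIn_le P
  have h1 : P ⊔ M = ⊤ := hM.2 _ (lt_of_le_of_ne le_sup_right fun h => hPM (h ▸ le_sup_left))
  have hFM : frattiniIn P ≤ M := by
    by_contra h
    have h2 : frattiniIn P ⊔ M = ⊤ := hM.2 _ (lt_of_le_of_ne le_sup_right fun e => h (e ▸ le_sup_left))
    have h3 := modular_aux (H := M) hF hFP
    rw [h2, inf_top_eq] at h3
    have h4 := frattiniIn_nongen (H := P ⊓ M) inf_le_left (by rw [sup_comm, ← h3])
    exact hPM (inf_eq_left.1 h4)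
  refine ⟨h1, le_antisymm ?_ (le_inf hFP hFM)⟩
  refine stepB_le hG hp hPS hP hne ?_ inf_le_left (fun e => hPM (inf_eq_left.1 e))
  refine normal_of_gen h1 ?_ ?_
  · rintro t ht x ⟨hx, hx'⟩
    have : t * x * t⁻¹ = (t * x * t⁻¹ * x⁻¹) * x := by group
    rw [this]
    exact (P ⊓ M).mul_mem (le_inf hFP hFM (comm_mem_frattiniIn hp hPS.1 ht hx)) ⟨hx, hx'⟩
  · rintro t ht x ⟨hx, hx'⟩
    exact ⟨hP.conj_mem x hx t, M.mul_mem (M.mul_mem ht hx') (M.inv_mem ht)⟩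

theorem coatom_conj {G : Type u} [Group G] [Finite G] (hG : IsMinimalNonsupersoluble G) {p : ℕ} (hp : p.Prime)
    {P : Subgroup G} (hPS : IsSylowSubgroup p P) (hP : P.Normal) (hne : P ≠ ⊥) {M N : Subgroup G}
    (hM : IsCoatom M) (hPM : ¬ P ≤ M) (hN : IsCoatom N) (hPN : ¬ P ≤ N) : ConjSubgroup M N := by
  have hF := frattiniIn_normal hP
  have hFP := frattiniIn_le P
  have hs := QuotientGroup.mk'_surjective (frattiniIn P)
  have hker : (QuotientGroup.mk' (frattiniIn P)).ker = frattiniIn P := QuotientGroup.ker_mk' _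
  set f := QuotientGroup.mk' (frattiniIn P) with hf
  have hVS : IsSylowSubgroup p (P.map f) := by
    refine ⟨hPS.1.map f, ?_⟩
    rw [index_map_eq _ hs (by rw [hker]; exact hFP)]; exact hPS.2
  have hVn : (P.map f).Normal := hP.map f hs
  have hco := sylow_coprime hp hVS
  have hc : ∀ x ∈ P.map f, ∀ y ∈ P.map f, x * y = y * x := by
    rintro _ ⟨x, hx, rfl⟩ _ ⟨y, hy, rfl⟩
    rw [← map_mul, ← map_mul, hf, QuotientGroup.mk'_eq_mk']
    refine ⟨_, comm_mem_frattiniIn hp hPS.1 (P.inv_mem hy) (P.inv_mem hx), ?_⟩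
    group
  have hcompl : ∀ M : Subgroup G, IsCoatom M → ¬ P ≤ M →
      frattiniIn P ≤ M ∧ IsComplement' (P.map f) (M.map f) := by
    intro M hM hPM
    obtain ⟨h1, h2⟩ := coatom_inf hG hp hPS hP hne hM hPM
    have hFM : frattiniIn P ≤ M := h2 ▸ inf_le_right
    refine ⟨hFM, isComplement'_of_disjoint_and_mul_eq_univ ?_ ?_⟩
    · rw [disjoint_iff, eq_bot_iff]
      rintro _ ⟨⟨x, hx, rfl⟩, y, hy, e⟩
      have hxM : x ∈ M := by
        obtain ⟨z, hz, e⟩ := (QuotientGroup.mk'_eq_mk' _).1 e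
        rw [← e]; exact M.mul_mem hy (hFM hz)
      have : x ∈ P ⊓ M := ⟨hx, hxM⟩
      rw [h2] at this
      exact (QuotientGroup.eq_one_iff _).2 this
    · rw [← normal_mul, ← Subgroup.map_sup, h1, map_top_of_surjective _ hs, coe_top]
  obtain ⟨hFM, hMc⟩ := hcompl M hM hPM
  obtain ⟨hFN, hNc⟩ := hcompl N hN hPN
  obtain ⟨g, hg⟩ := compl_conj hVn hc hco hMc hNc
  obtain ⟨g, rfl⟩ := hs g
  refine ⟨g, ?_⟩
  have key : ∀ K : Subgroup G, frattiniIn P ≤ K → ∀ x, f x ∈ K.map f ↔ x ∈ K := by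
    intro K hK x
    rw [← mem_comap, comap_map_eq_self (by rw [hker]; exact hK)]
  ext x
  rw [mem_conj, ← key N hFN, hg, mem_conj, ← key M hFM]
  simp only [map_mul, map_inv]

theorem exists_conj_sylow_le {G : Type*} [Group G] [Finite G] {r : ℕ} (hr : r.Prime) {R M : Subgroup G}
    (hR : IsSylowSubgroup r R) (hM : ¬ r ∣ M.index) : ∃ N, ConjSubgroup M N ∧ R ≤ N := by
  have : Fact r.Prime := ⟨hr⟩
  let S : Sylow r M := default
  let S' := (S : Subgroup M).map M.subtype
  have hS' : IsPGroup r S' := S.isPGroup'.map _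
  have hi : ¬ r ∣ S'.index := by
    rw [index_map_subtype, hr.dvd_mul]
    push Not
    exact ⟨S.not_dvd_index, hM⟩
  let T : Sylow r G := hS'.toSylow hi
  let U : Sylow r G := hR.1.toSylow hR.2
  obtain ⟨g, hg⟩ := MulAction.exists_smul_eq G T U
  refine ⟨_, ⟨g, rfl⟩, ?_⟩
  intro x hx
  have hx' : x ∈ U := hx
  rw [← hg] at hx'
  obtain ⟨y, hy, e⟩ := hx'
  rw [mem_conj]
  have hyM : y ∈ M := map_subtype_le (S : Subgroup M) hy
  have : g⁻¹ * x * g = y := by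
    rw [← e]; simp [mul_assoc]
  rw [this]; exact hyM

theorem chief_ne {G : Type*} [Group G] {A B : Subgroup G} (h : IsChiefFactor A B) : B ≠ A := by
  rintro rfl
  obtain ⟨-, -, hB, -, h, -⟩ := h
  exact h (QuotientGroup.map_mk'_self _)

theorem part2 {G : Type u} [Group G] [Finite G] (hG : IsMinimalNonsupersoluble G) {p q r : ℕ}
    (hp : p.Prime) (hq : q.Prime) (hr : r.Prime)
    {P Q R : Subgroup G} (hPS : IsSylowSubgroup p P) (hRS : IsSylowSubgroup r R) (hP : P.Normal)
    (hne : P ≠ ⊥) (hK : (P ⊔ Q).Normal) (hgen : P ⊔ Q ⊔ R = ⊤)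
    (hKR : (P ⊔ Q) ⊓ R = ⊥) (hQp : IsPGroup q Q) (hQc : IsCyclic Q) (hRc : IsCyclic R)
    (hrK : ¬ r ∣ Nat.card ↥(P ⊔ Q))
    (c2 : IsChiefFactor (P ⊔ Q) (P ⊔ frattiniIn Q))
    (c3 : IsChiefFactor (P ⊔ Q ⊔ R) (P ⊔ Q ⊔ frattiniIn R)) :
    (∃ M₁ M₂ M₃ : Subgroup G, IsCoatom M₁ ∧ IsCoatom M₂ ∧ IsCoatom M₃ ∧
      ¬ ConjSubgroup M₁ M₂ ∧ ¬ ConjSubgroup M₁ M₃ ∧ ¬ ConjSubgroup M₂ M₃ ∧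
      ∀ M : Subgroup G, IsCoatom M →
        ConjSubgroup M₁ M ∨ ConjSubgroup M₂ M ∨ ConjSubgroup M₃ M) := by
  obtain ⟨H, hH⟩ := exists_right_complement'_of_coprime (N := P) (sylow_coprime hp hPS)
  obtain ⟨M₁, hM₁, hHM⟩ := (IsCoatomic.eq_top_or_exists_le_coatom H).resolve_left (compl_ne_top hH hne)
  have hPM₁ : ¬ P ≤ M₁ := by
    intro h
    apply hM₁.1
    rw [eq_top_iff, ← hH.sup_eq_top]
    exact sup_le h hHM
  -- second
  have hYt : P ⊔ frattiniIn Q ⊔ R ≠ ⊤ := by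
    intro e
    have hB : (P ⊔ frattiniIn Q).Normal := c2.2.2.1
    have h1 := modular_aux (H := R) hB c2.2.1
    rw [e, inf_top_eq, hKR, sup_bot_eq] at h1
    exact chief_ne c2 h1.symm
  have hZt : P ⊔ Q ⊔ frattiniIn R ≠ ⊤ := by
    intro e
    apply chief_ne c3
    rw [e, hgen]
  have hY : ∀ X : Subgroup G, IsCoatom X → P ≤ X → R ≤ X → X = P ⊔ frattiniIn Q ⊔ R := by
    intro X hX hPX hRX
    have hQX : ¬ Q ≤ X := by
      intro h
      apply hX.1
      rw [eq_top_iff, ← hgen]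
      exact sup_le (sup_le hPX h) hRX
    have h1 : X ⊓ Q ≤ frattiniIn Q := (cyclic_sub hq hQp hQc inf_le_right).resolve_left
      (fun h => hQX (inf_eq_right.1 h))
    have h2 := modular_aux (H := Q) hP hPX
    have h3 : X ≤ P ⊔ frattiniIn Q ⊔ R := by
      intro x hx
      have hx' : x ∈ ((P ⊔ Q ⊔ R : Subgroup G) : Set G) := by rw [hgen]; trivial
      rw [normal_mul] at hx'
      obtain ⟨k, hk, y, hy, rfl⟩ := hx'
      refine mul_mem (mem_sup_left ?_) (mem_sup_right hy)
      have hkX : k ∈ X := by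
        have := X.mul_mem hx (X.inv_mem (hRX hy))
        simpa using this
      have : k ∈ X ⊓ (P ⊔ Q) := ⟨hkX, hk⟩
      rw [h2] at this
      exact sup_le_sup_left h1 P this
    by_contra hc
    exact hYt (hX.2 _ (lt_of_le_of_ne h3 hc))
  have hZ : ∀ X : Subgroup G, IsCoatom X → P ⊔ Q ≤ X → X = P ⊔ Q ⊔ frattiniIn R := by
    intro X hX hKX
    have hRX : ¬ R ≤ X := by
      intro h
      apply hX.1
      rw [eq_top_iff, ← hgen]
      exact sup_le hKX h
    have h1 : X ⊓ R ≤ frattiniIn R := (cyclic_sub hr hRS.1 hRc inf_le_right).resolve_left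
      (fun h => hRX (inf_eq_right.1 h))
    have h2 := modular_aux (H := R) hK hKX
    rw [hgen, inf_top_eq] at h2
    have h3 : X ≤ P ⊔ Q ⊔ frattiniIn R := by
      rw [h2]; exact sup_le_sup_left h1 _
    by_contra hc
    exact hZt (hX.2 _ (lt_of_le_of_ne h3 hc))
  have hYc : IsCoatom (P ⊔ frattiniIn Q ⊔ R) := by
    obtain ⟨X, hX, hle⟩ := (IsCoatomic.eq_top_or_exists_le_coatom _).resolve_left hYt
    rwa [← hY X hX (le_sup_left.trans (le_sup_left.trans hle)) (le_sup_right.trans hle)]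
  have hZc : IsCoatom (P ⊔ Q ⊔ frattiniIn R) := by
    obtain ⟨X, hX, hle⟩ := (IsCoatomic.eq_top_or_exists_le_coatom _).resolve_left hZt
    rwa [← hZ X hX (le_sup_left.trans hle)]
  refine ⟨M₁, _, _, hM₁, hYc, hZc, ?_, ?_, ?_, ?_⟩
  · exact fun h => hPM₁ (conj_le h hP (le_sup_left.trans le_sup_left))
  · exact fun h => hPM₁ (conj_le h hP (le_sup_left.trans le_sup_left))
  · intro h
    have h1 := conj_le h hK le_sup_left
    apply hYc.1
    rw [eq_top_iff, ← hgen]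
    exact sup_le h1 le_sup_right
  · intro M hM
    by_cases hPM : P ≤ M
    · right
      by_cases hKM : P ⊔ Q ≤ M
      · right
        rw [← hZ M hM hKM]; exact conj_refl M
      · left
        have h1 : M ⊔ (P ⊔ Q) = ⊤ :=
          hM.2 _ (lt_of_le_of_ne le_sup_left fun h => hKM (h ▸ le_sup_right))
        have h2 : ¬ r ∣ M.index := by
          intro hd
          apply hrK
          refine hd.trans ?_
          have h3 : M.index ∣ Nat.card ↥(P ⊔ Q) := by
            have h4 : (P ⊔ Q).relIndex M = (P ⊔ Q).index := by
              rw [← relIndex_sup_right, h1, relIndex_top_right]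
            obtain ⟨t, ht⟩ := relIndex_dvd_card (P ⊔ Q) M
            have e1 := M.card_mul_index
            have e2 := (P ⊔ Q).card_mul_index
            rw [h4] at ht
            have h5 : 0 < (P ⊔ Q).index := Nat.pos_of_ne_zero index_ne_zero_of_finite
            refine ⟨t, Nat.eq_of_mul_eq_mul_left h5 ?_⟩
            rw [ht] at e1
            rw [mul_comm, e2, ← e1]; ring
          exact h3
        obtain ⟨N, hMN, hRN⟩ := exists_conj_sylow_le hr hRS h2
        have hPN := conj_le (conj_symm hMN) hP hPM
        rw [← hY N (conj_coatom hMN hM) hPN hRN]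
        exact conj_symm hMN
    · left
      exact coatom_conj hG hp hPS hP hne hM₁ hPM₁ hM hPM

/-- Let `G` be a minimal nonsupersoluble group with exactly three prime divisors
`p₁ > p₂ > p₃` and Sylow subgroups `P₁, P₂, P₃`.  Then `G` is Ore dispersive, `P₂` and
`P₃` are cyclic, `G` has precisely three conjugacy classes of maximal subgroups, and
`P₁/Φ(P₁)`, `P₁P₂/P₁Φ(P₂)`, `P₁P₂P₃/P₁P₂Φ(P₃)` are chief factors of `G`. -/
theorem minimalNonsupersoluble_three_primes_structure
    (G : Type*) [Group G] [Finite G] (hG : IsMinimalNonsupersoluble G)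
    (p₁ p₂ p₃ : ℕ) (hp₁ : p₁.Prime) (hp₂ : p₂.Prime) (hp₃ : p₃.Prime)
    (h12 : p₁ > p₂) (h23 : p₂ > p₃)
    (hπ : (Nat.card G).primeFactors = {p₁, p₂, p₃})
    (P₁ P₂ P₃ : Subgroup G)
    (hP₁ : IsSylowSubgroup p₁ P₁) (hP₂ : IsSylowSubgroup p₂ P₂)
    (hP₃ : IsSylowSubgroup p₃ P₃) :
    (OreDispersive G ∧ IsCyclic ↥P₂ ∧ IsCyclic ↥P₃) ∧
    (∃ M₁ M₂ M₃ : Subgroup G, IsCoatom M₁ ∧ IsCoatom M₂ ∧ IsCoatom M₃ ∧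
      ¬ ConjSubgroup M₁ M₂ ∧ ¬ ConjSubgroup M₁ M₃ ∧ ¬ ConjSubgroup M₂ M₃ ∧
      ∀ M : Subgroup G, IsCoatom M →
        ConjSubgroup M₁ M ∨ ConjSubgroup M₂ M ∨ ConjSubgroup M₃ M) ∧
    (IsChiefFactor P₁ (frattiniIn P₁) ∧
      IsChiefFactor (P₁ ⊔ P₂) (P₁ ⊔ frattiniIn P₂) ∧
      IsChiefFactor (P₁ ⊔ P₂ ⊔ P₃) (P₁ ⊔ P₂ ⊔ frattiniIn P₃)) := by
  obtain ⟨hn, hK, hK1, hK2, hgen⟩ := stepA' hG.2 hp₁ hp₂ hp₃ h12 h23 hπ hP₁ hP₂ hP₃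
  have hne : ∀ (p : ℕ) (P : Subgroup G), p ∈ (Nat.card G).primeFactors → IsSylowSubgroup p P →
      P ≠ ⊥ := by
    intro p P hp hP e
    apply hP.2
    rw [e, index_bot]
    exact Nat.dvd_of_mem_primeFactors hp
  have hne1 := hne p₁ P₁ (by simp [hπ]) hP₁
  have hne2 := hne p₂ P₂ (by simp [hπ]) hP₂
  have hne3 := hne p₃ P₃ (by simp [hπ]) hP₃
  have hPQ : P₁ ⊓ P₂ = ⊥ := by
    rw [← card_eq_one]
    by_contra h
    obtain ⟨t, ht, hd⟩ := Nat.exists_prime_and_dvd h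
    have e1 := IsSylowSubgroup.prime_dvd hp₁ hP₁.1 ht (hd.trans (card_dvd_of_le inf_le_left))
    have e2 := IsSylowSubgroup.prime_dvd hp₂ hP₂.1 ht (hd.trans (card_dvd_of_le inf_le_right))
    omega
  have hKR : (P₁ ⊔ P₂) ⊓ P₃ = ⊥ := by
    rw [← card_eq_one]
    by_contra h
    obtain ⟨t, ht, hd⟩ := Nat.exists_prime_and_dvd h
    have e2 := IsSylowSubgroup.prime_dvd hp₃ hP₃.1 ht (hd.trans (card_dvd_of_le inf_le_right))
    rw [e2] at hd
    exact hK1 (hd.trans (card_dvd_of_le inf_le_left))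
  have hi : ¬ p₂ ∣ (P₁ ⊔ P₂).index := fun h => by
    have := hK2 p₂ hp₂ h
    omega
  obtain ⟨cQ, cR⟩ := stepC hG hp₁ hp₂ hP₁ hn hne1 hK hgen hPQ hKR hne2 hne3 hP₂.1 hi
  have c1 := stepB hG hp₁ hP₁ hn hne1
  have c2 := chief_cyclic hp₂ hn hK hP₂.1 cQ hne2 hPQ
  have c3 := chief_cyclic hp₃ hK (by rw [hgen]; infer_instance) hP₃.1 cR hne3 hKR
  exact ⟨⟨ore_of hp₁ hp₂ hp₃ h12 h23 hπ hP₁ hn hK hK1 hK2, cQ, cR⟩,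
    part2 hG hp₁ hp₂ hp₃ hP₁ hP₃ hn hne1 hK hgen hKR hP₂.1 cQ cR hK1 c2 c3, c1, c2, c3⟩
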